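/- For every δ ∈ [0,1] and every x ∈ X, the set {s ∈ M_{m,n}(K_∞) : u_s x δ-escapes on average} has Hausdorff dimension at most mn − δmn/(m+n), where the Hausdorff dimension is computed in M_{m,n}(K_∞) ≅ K_∞^{mn} with respect to the sup-norm metric. -/

import Mathlib

/-! The proof is a Margulis-function argument: cusp excursions are charged to a height function that
contracts on average along the horospherical group, and the resulting weighted count of cylinders
is turned into a dimension bound.

*Height.* For a lattice `Λ = g F[T]^d` let `q^{-ee g}` be the length of its shortest nonzero vector,
and let `ht g = q^{m ee(g)} + q^{n ee(g*)}`, where `g*` is the dual lattice. Reduction theory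
(`reduction`: `g = k · diag(T^{-a}) · γ⁻¹` with `k` integral over `𝒪_∞` and `γ` over `F[T]`)
determines the successive minima of `Λ` and of its dual, and shows that points of bounded height
lie in a compact set (`exists_compact`).

*Contraction.* Let `s` run through the matrices of `D = (m + n) t` digits, so that `g_t u_s` runs
through one expanding block of size `q^{mnD}`. For a single vector `v`, the average over `s` of
`‖g_t u_s v‖^{-m}` is `O(t q^{-mnt}) ‖v‖^{-m}` (`BlockAct.average`), and dually for the contragredient
action with `n` in place of `m`. If at most `m` successive minima of `Λ` are comparable with the
first, there are so few candidates for the shortest vector of `g_t u_s Λ` that the same bound holds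
for `q^{m ee}`, up to a factor linear in `t` (`contraction_few`). Otherwise, since the exponents
of the minima sum to zero, the last minimum is so large that the dual term of the height dominates
(`sum_exponents`). Altogether the average of `ht` over one block is at most
`poly(t) q^{-mnt} ht g + b` (`drift_ht`).

*Covering.* Let `M` be a large constant and call `ht g > M q^{mnt}` a visit to the cusp. By the drift
inequality, each visit makes the height-weighted count of cylinders lose a factor `q^{mnt}`. Hence
the parameters `s ∈ M_{m,n}(𝒪_∞)` whose trajectory makes at least `p` visits among its first `k`
steps are covered by `O(q^{-mntp} (q^{mnD} poly(t))^k)` balls of radius `q^{-Dk}` (`covering`).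

*Dimension.* If `u_s x` `δ`-escapes on average and `δ' < δ`, then `p ≥ δ' k` for all large `k`
(`cuspCount_of_escape`), so the Hausdorff dimension is at most
`(mnD - mntδ' + log_q poly(t)) / D = mn - δ' mn / (m + n) + O(log t / t)`; this is
`dimH_cusp` and `exists_time`. Letting `t → ∞` and `δ' → δ`, and decomposing `M_{m,n}(K_∞)` into
countably many translates of `M_{m,n}(𝒪_∞)` (`exists_polar`), gives the theorem. -/

open scoped Classical

set_option synthInstance.maxHeartbeats 1000000
set_option maxHeartbeats 1000000
set_option linter.unusedSectionVars false

noncomputable section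

variable (F : Type*) [Field F] [Fintype F]

/-- The absolute value `|x| = q^{-v(x)}` on `K_∞ = 𝔽_q((T⁻¹))`. -/
def absv (x : LaurentSeries F) : ℝ :=
  if x = 0 then 0 else (Fintype.card F : ℝ) ^ (-(HahnSeries.order x))

lemma absv_nonneg (x : LaurentSeries F) : 0 ≤ absv F x := by
  unfold absv; split
  · exact le_rfl
  · exact zpow_nonneg (by positivity) _

lemma absv_pos {x : LaurentSeries F} (hx : x ≠ 0) : 0 < absv F x := by
  unfold absv
  rw [if_neg hx]
  exact zpow_pos (by exact_mod_cast Fintype.card_pos) _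

lemma absv_neg_eq (x : LaurentSeries F) : absv F (-x) = absv F x := by
  simp [absv, neg_eq_zero, HahnSeries.order_neg]

lemma absv_add_le (x y : LaurentSeries F) :
    absv F (x + y) ≤ max (absv F x) (absv F y) := by
  rcases eq_or_ne (x + y) 0 with h | h
  · rw [h, show absv F 0 = 0 by simp [absv]]
    exact le_max_of_le_left (absv_nonneg F x)
  rcases eq_or_ne x 0 with hx | hx
  · simp [hx, le_max_iff, le_refl]
  rcases eq_or_ne y 0 with hy | hy
  · simp [hy, le_max_iff, le_refl]
  have horder := HahnSeries.min_order_le_order_add h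
  have h1 : (1 : ℝ) ≤ (Fintype.card F : ℝ) := by exact_mod_cast Fintype.card_pos
  unfold absv
  rw [if_neg h, if_neg hx, if_neg hy]
  rcases le_total (HahnSeries.order x) (HahnSeries.order y) with hc | hc
  · refine le_max_of_le_left (zpow_le_zpow_right₀ h1 (neg_le_neg ?_))
    exact le_trans (by simpa [min_eq_left hc] using le_rfl) ((min_eq_left hc) ▸ horder)
  · refine le_max_of_le_right (zpow_le_zpow_right₀ h1 (neg_le_neg ?_))
    exact (min_eq_right hc) ▸ horder

instance : MetricSpace (LaurentSeries F) where
  dist x y := absv F (x - y)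
  dist_self x := by simp [absv]
  dist_comm x y := by
    show absv F (x - y) = absv F (y - x)
    rw [show (x - y : LaurentSeries F) = -(y - x) by ring, absv_neg_eq]
  dist_triangle x y z := by
    show absv F (x - z) ≤ absv F (x - y) + absv F (y - z)
    have h := absv_add_le F (x - y) (y - z)
    rw [sub_add_sub_cancel] at h
    exact h.trans (max_le_add_of_nonneg (absv_nonneg F _) (absv_nonneg F _))
  eq_of_dist_eq_zero := by
    intro x y h
    replace h : absv F (x - y) = 0 := h
    by_contra hne
    exact absurd h (ne_of_gt (absv_pos F (sub_ne_zero.mpr hne)))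

/-- `M_{m,n}(K_∞)` with the sup-norm metric (the `Pi` metric on `Fin m → Fin n → K_∞`). -/
instance (m n : ℕ) : MetricSpace (Matrix (Fin m) (Fin n) (LaurentSeries F)) :=
  inferInstanceAs (MetricSpace (Fin m → Fin n → LaurentSeries F))

/-- the embedding `R = 𝔽_q[T] ↪ K_∞`, sending `T` to `u⁻¹` (`u = T⁻¹` the Laurent variable). -/
def polyToK : Polynomial F →+* LaurentSeries F :=
  (Polynomial.aeval (HahnSeries.single (-1 : ℤ) (1 : F) : LaurentSeries F)).toRingHom

/-- `G = SL_d(K_∞)`. -/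
abbrev SLK (d : ℕ) := Matrix.SpecialLinearGroup (Fin d) (LaurentSeries F)

/-- `Γ = SL_d(R)`, realized as the subgroup of `G` of matrices with entries in
`R = 𝔽_q[T]`. -/
def Gamma (d : ℕ) : Subgroup (SLK F d) :=
  (Matrix.SpecialLinearGroup.map (polyToK F)).range

/-- the homogeneous space `X = G/Γ`, identified with the `G`-orbit of the lattice `R^d`
(`gΓ ↔ g R^d`). -/
abbrev XSpace (d : ℕ) := SLK F d ⧸ Gamma F d

/-- `u = T⁻¹ ∈ K_∞`, the uniformizer. -/
def Xu : LaurentSeries F := HahnSeries.single 1 1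

lemma Xu_ne_zero : Xu F ≠ 0 := HahnSeries.single_ne_zero one_ne_zero

/-- the matrix of the diagonal element `g_t = diag((T⁻¹)^{-nt} I_m, (T⁻¹)^{mt} I_n)`. -/
def gMat (m n : ℕ) (t : ℤ) : Matrix (Fin (m + n)) (Fin (m + n)) (LaurentSeries F) :=
  Matrix.reindex finSumFinEquiv finSumFinEquiv
    (Matrix.fromBlocks ((Xu F ^ (-(n * t))) • (1 : Matrix (Fin m) (Fin m) (LaurentSeries F))) 0 0
      ((Xu F ^ ((m : ℤ) * t)) • (1 : Matrix (Fin n) (Fin n) (LaurentSeries F))))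

lemma gMat_det (m n : ℕ) (t : ℤ) : (gMat F m n t).det = 1 := by
  unfold gMat
  rw [Matrix.det_reindex_self, Matrix.det_fromBlocks_zero₂₁, Matrix.det_smul, Matrix.det_smul,
    Matrix.det_one, Matrix.det_one, mul_one, mul_one, Fintype.card_fin, Fintype.card_fin,
    ← zpow_natCast (Xu F ^ (-((n : ℤ) * t))) m, ← zpow_natCast (Xu F ^ ((m : ℤ) * t)) n,
    ← zpow_mul, ← zpow_mul, ← zpow_add₀ (Xu_ne_zero F)]
  rw [show (-((n : ℤ) * t)) * (m : ℤ) + ((m : ℤ) * t) * (n : ℤ) = 0 by ring, zpow_zero]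

/-- the element `g_t ∈ G`. -/
def gElem (m n : ℕ) (t : ℤ) : SLK F (m + n) := ⟨gMat F m n t, gMat_det F m n t⟩

/-- the matrix of the upper block-unipotent element `u_s` with blocks `(I_m, s; 0, I_n)`. -/
def uMat {m n : ℕ} (s : Matrix (Fin m) (Fin n) (LaurentSeries F)) :
    Matrix (Fin (m + n)) (Fin (m + n)) (LaurentSeries F) :=
  Matrix.reindex finSumFinEquiv finSumFinEquiv (Matrix.fromBlocks 1 s 0 1)

lemma uMat_det {m n : ℕ} (s : Matrix (Fin m) (Fin n) (LaurentSeries F)) :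
    (uMat F s).det = 1 := by
  unfold uMat
  rw [Matrix.det_reindex_self, Matrix.det_fromBlocks_zero₂₁, Matrix.det_one, Matrix.det_one,
    mul_one]

/-- the element `u_s ∈ G`. -/
def uElem {m n : ℕ} (s : Matrix (Fin m) (Fin n) (LaurentSeries F)) : SLK F (m + n) :=
  ⟨uMat F s, uMat_det F s⟩


section

variable (F : Type*) [Field F] [Fintype F]

instance (d : ℕ) : TopologicalSpace (SLK F d) :=
  inferInstanceAs (TopologicalSpace {A : Matrix (Fin d) (Fin d) (LaurentSeries F) // A.det = 1})

instance (d : ℕ) : TopologicalSpace (XSpace F d) := instTopologicalSpaceQuotient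

end

/-- `y ∈ X` `δ`-escapes on average if for every compact `Q ⊆ X`,
`liminf_{N→∞} (1/N) #{ℓ ∈ {1,…,N} : g_ℓ y ∉ Q} ≥ δ`. -/
def deltaEscapes (F : Type*) [Field F] [Fintype F] (m n : ℕ) (δ : ℝ)
    (y : XSpace F (m + n)) : Prop :=
  ∀ Q : Set (XSpace F (m + n)), IsCompact Q →
    δ ≤ Filter.atTop.liminf (fun N : ℕ =>
      (((Finset.Icc 1 N).filter (fun ℓ : ℕ => gElem F m n (ℓ : ℤ) • y ∉ Q)).card : ℝ) / N)

/-! ### The absolute value and the sup norm -/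

/-- The cardinality `q` of the constant field, as a real number. -/
def qR : ℝ := (Fintype.card F : ℝ)

lemma one_lt_qR : 1 < qR F := by
  unfold qR; exact_mod_cast Fintype.one_lt_card

lemma qR_pos : 0 < qR F := zero_lt_one.trans (one_lt_qR F)

lemma qR_ne : qR F ≠ 0 := (qR_pos F).ne'

lemma absv_zero : absv F 0 = 0 := by simp [absv]

lemma absv_of_ne {x : LaurentSeries F} (hx : x ≠ 0) : absv F x = qR F ^ (-x.order) := by
  simp [absv, hx, qR]

lemma absv_mul (x y : LaurentSeries F) : absv F (x * y) = absv F x * absv F y := by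
  by_cases hx : x = 0
  · simp [hx, absv_zero]
  by_cases hy : y = 0
  · simp [hy, absv_zero]
  rw [absv_of_ne F hx, absv_of_ne F hy, absv_of_ne F (mul_ne_zero hx hy),
    HahnSeries.order_mul hx hy, ← zpow_add₀ (qR_ne F)]
  congr 1; ring

lemma absv_Xu_zpow (k : ℤ) : absv F (Xu F ^ k) = qR F ^ (-k) := by
  have h : Xu F ^ k = HahnSeries.single k (1 : F) := by
    rw [Xu, ← RatFunc.single_zpow]
  rw [h, absv_of_ne F (by simp), HahnSeries.order_single one_ne_zero]

lemma absv_le_iff (x : LaurentSeries F) (k : ℤ) :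
    absv F x ≤ qR F ^ (-k) ↔ ∀ i < k, x.coeff i = 0 := by
  by_cases hx : x = 0
  · simp [hx, absv_zero]; positivity [qR_pos F]
  rw [absv_of_ne F hx, zpow_le_zpow_iff_right₀ (one_lt_qR F), neg_le_neg_iff]
  constructor
  · intro h i hi
    exact HahnSeries.coeff_eq_zero_of_lt_order (hi.trans_le h)
  · intro h
    by_contra! hlt
    exact hx (HahnSeries.coeff_order_eq_zero.1 (h _ hlt))

lemma absv_ofPS_le_one (x : PowerSeries F) : absv F (HahnSeries.ofPowerSeries ℤ F x) ≤ 1 := by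
  have := (absv_le_iff F (HahnSeries.ofPowerSeries ℤ F x) 0).2 (by
    intro i hi
    rw [PowerSeries.coeff_coe, if_pos hi])
  simpa using this

/-- A Laurent series becomes integral after multiplication by any large power of `T⁻¹`. -/
lemma exists_shift (x : LaurentSeries F) :
    ∃ B : ℕ, ∀ C : ℕ, B ≤ C → ∃ y : PowerSeries F,
      Xu F ^ (C : ℤ) * x = HahnSeries.ofPowerSeries ℤ F y := by
  refine ⟨x.order.natAbs, fun C hC => ?_⟩
  refine ⟨PowerSeries.X ^ (((C : ℤ) + x.order).toNat) * x.powerSeriesPart, ?_⟩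
  rw [map_mul, map_pow, HahnSeries.ofPowerSeries_X]
  conv_lhs => rw [← LaurentSeries.single_order_mul_powerSeriesPart x]
  rw [← mul_assoc]
  congr 1
  have h1 : (HahnSeries.single x.order (1 : F) : LaurentSeries F) = Xu F ^ x.order := by
    rw [Xu, ← RatFunc.single_zpow]
  rw [h1, ← zpow_add₀ (Xu_ne_zero F)]
  rw [show (HahnSeries.single (1:ℤ) (1:F) : LaurentSeries F) = Xu F from rfl, ← zpow_natCast]
  congr 1
  omega

lemma polyToK_monomial (k : ℕ) (a : F) :
    polyToK F (Polynomial.monomial k a) = HahnSeries.single (-(k : ℤ)) a := by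
  have hC : algebraMap F (LaurentSeries F) a = HahnSeries.C a := by
    rw [HahnSeries.algebraMap_apply', ← PowerSeries.C_eq_algebraMap, HahnSeries.ofPowerSeries_C]
  simp only [polyToK, AlgHom.toRingHom_eq_coe, RingHom.coe_coe, Polynomial.aeval_monomial]
  rw [hC, HahnSeries.single_pow, HahnSeries.C_apply, HahnSeries.single_mul_single]
  simp

lemma polyToK_coeff (p : Polynomial F) (i : ℕ) : (polyToK F p).coeff (-(i : ℤ)) = p.coeff i := by
  induction p using Polynomial.induction_on' with
  | add p r hp hr => simp [hp, hr]
  | monomial k a =>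
    rw [polyToK_monomial, Polynomial.coeff_monomial, HahnSeries.coeff_single]
    simp [eq_comm]

lemma polyToK_injective : Function.Injective (polyToK F) := by
  intro p r h
  ext i
  rw [← polyToK_coeff, ← polyToK_coeff, h]

lemma one_le_absv_poly {p : Polynomial F} (hp : p ≠ 0) : 1 ≤ absv F (polyToK F p) := by
  by_contra! h
  have h2 : absv F (polyToK F p) ≤ qR F ^ (-(1:ℤ)) := by
    have hne : polyToK F p ≠ 0 := by
      rw [Ne, map_eq_zero_iff _ (polyToK_injective F)]; exact hp
    rw [absv_of_ne F hne] at h ⊢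
    rw [← zpow_zero (qR F), zpow_lt_zpow_iff_right₀ (one_lt_qR F)] at h
    exact zpow_le_zpow_right₀ (one_lt_qR F).le (by omega)
  rw [absv_le_iff] at h2
  apply hp
  ext i
  rw [← polyToK_coeff, h2 _ (by omega)]; simp

lemma poly_coeff_eq_zero {p : Polynomial F} {k : ℤ} (h : absv F (polyToK F p) ≤ qR F ^ k)
    {i : ℕ} (hi : k < i) : p.coeff i = 0 := by
  rw [← polyToK_coeff]
  exact (absv_le_iff F _ (-k)).1 (by simpa using h) _ (by omega)

lemma polyToK_one_absv : absv F (polyToK F 1) = 1 := by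
  have := absv_Xu_zpow F 0
  simpa using this

variable {F} in
/-- The sup norm of a vector. -/
def nrm {ι : Type*} [Fintype ι] (v : ι → LaurentSeries F) : ℝ := dist v 0

lemma absv_sub_zero (x : LaurentSeries F) : dist x 0 = absv F x := by
  show absv F (x - 0) = _
  rw [sub_zero]

section nrm
variable {F}
variable {ι : Type*} [Fintype ι]

lemma nrm_nonneg (v : ι → LaurentSeries F) : 0 ≤ nrm v := dist_nonneg

lemma nrm_le_iff {v : ι → LaurentSeries F} {r : ℝ} (hr : 0 ≤ r) :
    nrm v ≤ r ↔ ∀ i, absv F (v i) ≤ r := by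
  unfold nrm
  rw [dist_pi_le_iff hr]
  simp [absv_sub_zero]

lemma le_nrm (v : ι → LaurentSeries F) (i : ι) : absv F (v i) ≤ nrm v :=
  (nrm_le_iff (nrm_nonneg v)).1 le_rfl i

lemma nrm_pos {v : ι → LaurentSeries F} (hv : v ≠ 0) : 0 < nrm v := dist_pos.2 hv

lemma exists_nrm_eq {v : ι → LaurentSeries F} (hv : v ≠ 0) :
    ∃ i, v i ≠ 0 ∧ absv F (v i) = nrm v := by
  obtain ⟨j, hj⟩ := Function.ne_iff.1 hv
  obtain ⟨i, -, hi⟩ := Finset.exists_max_image Finset.univ (fun i => absv F (v i)) ⟨j, by simp⟩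
  have : absv F (v i) = nrm v :=
    le_antisymm (le_nrm v i) ((nrm_le_iff (absv_nonneg F _)).2 fun k => hi k (by simp))
  refine ⟨i, ?_, this⟩
  intro h0
  have := nrm_pos hv
  simp_all [absv_zero]

lemma exists_nrm_zpow {v : ι → LaurentSeries F} (hv : v ≠ 0) : ∃ k : ℤ, nrm v = qR F ^ k := by
  obtain ⟨i, h0, hi⟩ := exists_nrm_eq hv
  exact ⟨_, by rw [← hi, absv_of_ne F h0]⟩

lemma absv_sum_le {α : Type*} (s : Finset α) (f : α → LaurentSeries F) {r : ℝ} (hr : 0 ≤ r)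
    (h : ∀ i ∈ s, absv F (f i) ≤ r) : absv F (∑ i ∈ s, f i) ≤ r := by
  induction s using Finset.induction_on with
  | empty => simpa [absv_zero] using hr
  | insert a s ha ih =>
    rw [Finset.sum_insert ha]
    exact (absv_add_le F _ _).trans (max_le (h _ (by simp)) (ih fun i hi => h i (by simp [hi])))

lemma nrm_mulVec_le {κ : Type*} [Fintype κ] (A : Matrix κ ι (LaurentSeries F)) {r : ℝ}
    (hA : ∀ i j, absv F (A i j) ≤ r) (hr : 0 ≤ r) (v : ι → LaurentSeries F) :
    nrm (A.mulVec v) ≤ r * nrm v := by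
  rw [nrm_le_iff (mul_nonneg hr (nrm_nonneg v))]
  intro i
  refine absv_sum_le _ _ (mul_nonneg hr (nrm_nonneg v)) fun j _ => ?_
  rw [absv_mul]
  exact mul_le_mul (hA i j) (le_nrm v j) (absv_nonneg F _) hr

end nrm

variable {F} in
/-- The compact open subgroup `SL_d(𝒪_∞)` acts by isometries; `𝒪_∞` is encoded as `F⟦X⟧`. -/
def kmap {d : ℕ} : Matrix.SpecialLinearGroup (Fin d) (PowerSeries F) →* SLK F d :=
  Matrix.SpecialLinearGroup.map (HahnSeries.ofPowerSeries ℤ F)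

section iso
variable {F}
lemma nrm_kmap {d : ℕ} (k : Matrix.SpecialLinearGroup (Fin d) (PowerSeries F))
    (v : Fin d → LaurentSeries F) : nrm ((kmap k).1.mulVec v) = nrm v := by
  have key : ∀ (k : Matrix.SpecialLinearGroup (Fin d) (PowerSeries F))
    (v : Fin d → LaurentSeries F), nrm ((kmap k).1.mulVec v) ≤ nrm v := by
    intro k v
    have := nrm_mulVec_le (kmap k).1 (r := 1) (fun i j => absv_ofPS_le_one F _) zero_le_one v
    simpa using this
  refine le_antisymm (key k v) ?_
  have h := key k⁻¹ ((kmap k).1.mulVec v)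
  rwa [Matrix.mulVec_mulVec, ← Matrix.SpecialLinearGroup.coe_mul, ← map_mul, inv_mul_cancel,
    map_one, Matrix.SpecialLinearGroup.coe_one, Matrix.one_mulVec] at h
end iso

/-! ### Reduction theory -/

section reduction
variable {F}

/-- The inclusion `SL_d(F[T]) → SL_d(K_∞)`. -/
def gam {d : ℕ} : Matrix.SpecialLinearGroup (Fin d) (Polynomial F) →* SLK F d :=
  Matrix.SpecialLinearGroup.map (polyToK F)

lemma reduction_aux {d : ℕ} (g : SLK F d) (N : ℕ) :
    ∀ (γ : Matrix.SpecialLinearGroup (Fin d) (Polynomial F)) (b : Fin d → ℤ)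
      (κ : Matrix (Fin d) (Fin d) (PowerSeries F)),
      (∀ i j, (g * gam γ).1 i j = HahnSeries.ofPowerSeries ℤ F (κ i j) * Xu F ^ (b j)) →
      ∑ j, b j = -(N : ℤ) →
      ∃ (k : Matrix.SpecialLinearGroup (Fin d) (PowerSeries F))
        (γ : Matrix.SpecialLinearGroup (Fin d) (Polynomial F)) (a : Fin d → ℤ),
        ∑ j, a j = 0 ∧
        ∀ i j, (g * gam γ).1 i j = (kmap k).1 i j * Xu F ^ (a j) := by
  have hdet : ∀ (N : ℕ) (γ : Matrix.SpecialLinearGroup (Fin d) (Polynomial F)) (b : Fin d → ℤ)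
      (κ : Matrix (Fin d) (Fin d) (PowerSeries F)),
      (∀ i j, (g * gam γ).1 i j = HahnSeries.ofPowerSeries ℤ F (κ i j) * Xu F ^ (b j)) →
      ∑ j, b j = -(N : ℤ) → κ.det = PowerSeries.X ^ N := by
    intro N γ b κ h hb
    have h1 : (g * gam γ).1 = Matrix.of fun i j => Xu F ^ (b j) *
        ((HahnSeries.ofPowerSeries ℤ F).mapMatrix κ) i j := by
      ext1 i j
      rw [h i j, mul_comm]; rfl
    have h2 := (g * gam γ).2
    rw [h1, Matrix.det_mul_row, ← RingHom.map_det] at h2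
    have h3 : ∏ j, Xu F ^ (b j) = Xu F ^ (-(N : ℤ)) := by
      rw [← hb]
      generalize (Finset.univ : Finset (Fin d)) = s
      induction s using Finset.induction_on with
      | empty => simp
      | insert a s ha ih =>
        rw [Finset.prod_insert ha, Finset.sum_insert ha, ih, zpow_add₀ (Xu_ne_zero F)]
    rw [h3] at h2
    apply HahnSeries.ofPowerSeries_injective (Γ := ℤ)
    rw [map_pow, HahnSeries.ofPowerSeries_X]
    change _ = Xu F ^ N
    rw [zpow_neg, zpow_natCast] at h2
    have h4 : Xu F ^ N ≠ 0 := pow_ne_zero _ (Xu_ne_zero F)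
    field_simp at h2
    exact h2
  induction N with
  | zero =>
    intro γ b κ h hb
    exact ⟨⟨κ, by simpa using hdet 0 γ b κ h hb⟩, γ, b, by simpa using hb, h⟩
  | succ N ih =>
    intro γ b κ h hb
    have hd := hdet (N + 1) γ b κ h hb
    have hd0 : ((PowerSeries.constantCoeff (R := F)).mapMatrix κ).det = 0 := by
      rw [← RingHom.map_det, hd]; simp
    obtain ⟨c, hc0, hc⟩ := Matrix.exists_mulVec_eq_zero_iff.2 hd0
    obtain ⟨j0, hj0, hmin⟩ := Finset.exists_min_image (Finset.univ.filter fun j => c j ≠ 0) b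
      (by
        obtain ⟨j, hj⟩ := Function.ne_iff.1 hc0
        exact ⟨j, by simpa using hj⟩)
    simp only [Finset.mem_filter, Finset.mem_univ, true_and] at hj0 hmin
    -- the new column: a polynomial combination killing the leading term
    set w : Fin d → Polynomial F := fun j =>
      if c j = 0 then 0 else Polynomial.monomial (b j - b j0).toNat (c j / c j0) with hw
    have hE : (Matrix.updateCol (1 : Matrix (Fin d) (Fin d) (Polynomial F)) j0 w).det = 1 := by
      rw [← Matrix.cramer_apply, Matrix.cramer_one]
      simp [hw, hj0]
    have hz : ∀ i, ∃ z : PowerSeries F,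
        ∑ l, κ i l * PowerSeries.C (c l / c j0) = PowerSeries.X * z := by
      intro i
      have : PowerSeries.X ∣ ∑ l, κ i l * PowerSeries.C (c l / c j0) := by
        rw [PowerSeries.X_dvd_iff, map_sum]
        have := congrFun hc i
        simp only [Matrix.mulVec, dotProduct, RingHom.mapMatrix_apply, Matrix.map_apply,
          Pi.zero_apply] at this
        simp only [map_mul, PowerSeries.constantCoeff_C, mul_div_assoc']
        rw [← Finset.sum_div, this, zero_div]
      exact this
    choose z hz using hz
    have hwl : ∀ l, Xu F ^ (b l) * polyToK F (w l) =
        HahnSeries.ofPowerSeries ℤ F (PowerSeries.C (c l / c j0)) * Xu F ^ (b j0) := by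
      intro l
      by_cases hl : c l = 0
      · simp [hw, hl]
      · have hle := hmin l hl
        simp only [hw, hl, if_false]
        rw [polyToK_monomial, HahnSeries.ofPowerSeries_C, HahnSeries.C_apply, Xu,
          ← RatFunc.single_zpow, ← RatFunc.single_zpow, HahnSeries.single_mul_single,
          HahnSeries.single_mul_single]
        rw [one_mul, mul_one]
        congr 1
        congr 1
        omega
    let E : Matrix.SpecialLinearGroup (Fin d) (Polynomial F) := ⟨_, hE⟩
    refine ih (γ * E) (Function.update b j0 (b j0 + 1)) (κ.updateCol j0 z) ?_ ?_
    · intro i j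
      have hmul : (g * gam (γ * E)).1 i j = ∑ l, (g * gam γ).1 i l *
          polyToK F (Matrix.updateCol (1 : Matrix (Fin d) (Fin d) (Polynomial F)) j0 w l j) := by
        rw [map_mul, ← mul_assoc, Matrix.SpecialLinearGroup.coe_mul, Matrix.mul_apply]
        rfl
      rw [hmul]
      by_cases hj : j = j0
      · subst hj
        simp only [Matrix.updateCol_self, Function.update_self]
        have : ∀ l, (g * gam γ).1 i l * polyToK F (w l) =
            HahnSeries.ofPowerSeries ℤ F (κ i l * PowerSeries.C (c l / c j)) * Xu F ^ (b j) := by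
          intro l
          rw [h, mul_assoc, hwl, map_mul, mul_assoc]
        rw [Finset.sum_congr rfl fun l _ => this l, ← Finset.sum_mul, ← map_sum, hz, map_mul,
          HahnSeries.ofPowerSeries_X, zpow_add₀ (Xu_ne_zero F), zpow_one]
        rw [show (HahnSeries.single (1:ℤ) (1:F) : LaurentSeries F) = Xu F from rfl]
        ring
      · rw [Function.update_of_ne hj, Matrix.updateCol_ne hj, ← h i j]
        rw [Finset.sum_eq_single j]
        · simp [Matrix.updateCol_ne hj]
        · intro l _ hl
          simp [Matrix.updateCol_ne hj, Matrix.one_apply_ne hl]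
        · simp
    · rw [Finset.sum_update_of_mem (Finset.mem_univ _)]
      have := Finset.sum_erase_add Finset.univ b (Finset.mem_univ j0)
      rw [Finset.sdiff_singleton_eq_erase]
      push_cast at hb ⊢
      omega

/-- Every `g ∈ SL_d(K_∞)` is `k · diag(u^{a}) · γ⁻¹` with `k ∈ SL_d(𝒪_∞)` and `γ ∈ SL_d(F[T])`:
a basis of the lattice with the largest possible total valuation is orthogonal, because a linear
relation between the leading coefficients of its columns would allow one to shorten a column. -/
lemma reduction {d : ℕ} (g : SLK F d) :
    ∃ (k : Matrix.SpecialLinearGroup (Fin d) (PowerSeries F))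
      (γ : Matrix.SpecialLinearGroup (Fin d) (Polynomial F)) (a : Fin d → ℤ),
      ∑ j, a j = 0 ∧
      ∀ i j, (g * gam γ).1 i j = (kmap k).1 i j * Xu F ^ (a j) := by
  choose B hB using fun i j => exists_shift F (g.1 i j)
  set C := ∑ i, ∑ j, B i j
  have hC : ∀ i j, B i j ≤ C := fun i j =>
    (Finset.single_le_sum (f := fun j => B i j) (fun _ _ => Nat.zero_le _) (Finset.mem_univ j)).trans
      (Finset.single_le_sum (f := fun i => ∑ j, B i j) (fun _ _ => Nat.zero_le _)
        (Finset.mem_univ i))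
  choose κ hκ using fun i j => hB i j C (hC i j)
  refine reduction_aux g (d * C) 1 (fun _ => -(C : ℤ)) (Matrix.of κ) ?_ (by simp)
  intro i j
  rw [Matrix.of_apply, ← hκ, map_one, mul_one, mul_comm, ← mul_assoc, ← zpow_add₀ (Xu_ne_zero F)]
  simp

end reduction

/-! ### The first minimum of a lattice and its dual -/

section minimum
variable {F}

/-- The diagonal element `diag(u^{a_j})` of `SL_d(K_∞)`. -/
def diagSL {d : ℕ} (a : Fin d → ℤ) (h : ∑ j, a j = 0) : SLK F d :=
  ⟨Matrix.diagonal fun j => Xu F ^ (a j), by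
    rw [Matrix.det_diagonal]
    have h3 : ∏ j, Xu F ^ (a j) = Xu F ^ (∑ j, a j) := by
      generalize (Finset.univ : Finset (Fin d)) = s
      induction s using Finset.induction_on with
      | empty => simp
      | insert a s ha ih =>
        rw [Finset.prod_insert ha, Finset.sum_insert ha, ih, zpow_add₀ (Xu_ne_zero F)]
    rw [h3, h, zpow_zero]⟩

/-- The automorphism `g ↦ (g⁻¹)ᵀ`, which sends a lattice to its dual lattice. -/
def dual {d : ℕ} {R : Type*} [CommRing R] :
    Matrix.SpecialLinearGroup (Fin d) R →* Matrix.SpecialLinearGroup (Fin d) R where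
  toFun g := (g⁻¹).transpose
  map_one' := by ext i j; simp [Matrix.one_apply, eq_comm]
  map_mul' g h := by
    rw [mul_inv_rev]
    ext1 i j
    simp only [Matrix.SpecialLinearGroup.transpose, Matrix.SpecialLinearGroup.coe_mul,
      Matrix.transpose_mul]
    rfl

lemma dual_eq_of {d : ℕ} {R : Type*} [CommRing R] (g h : Matrix.SpecialLinearGroup (Fin d) R)
    (H : g.1 * h.1.transpose = 1) : dual g = h := by
  have : g⁻¹ = h.transpose := by
    rw [inv_eq_iff_mul_eq_one]
    apply Subtype.ext
    exact H
  show (g⁻¹).transpose = h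
  rw [this]
  apply Subtype.ext
  exact Matrix.transpose_transpose _

lemma dual_spec {d : ℕ} {R : Type*} [CommRing R] (g : Matrix.SpecialLinearGroup (Fin d) R) :
    g.1 * (dual g).1.transpose = 1 := by
  show g.1 * ((g⁻¹).1.transpose).transpose = 1
  rw [Matrix.transpose_transpose, ← Matrix.SpecialLinearGroup.coe_mul, mul_inv_cancel]
  rfl

lemma dual_map {d : ℕ} {R S : Type*} [CommRing R] [CommRing S] (f : R →+* S)
    (g : Matrix.SpecialLinearGroup (Fin d) R) :
    dual (Matrix.SpecialLinearGroup.map f g) = Matrix.SpecialLinearGroup.map f (dual g) := by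
  apply dual_eq_of
  have h := congrArg f.mapMatrix (dual_spec g)
  rw [map_mul, map_one] at h
  exact h

lemma dual_diagSL {d : ℕ} (a : Fin d → ℤ) (h : ∑ j, a j = 0) :
    dual (diagSL (F := F) a h) = diagSL (fun j => - a j) (by simp [h]) := by
  apply dual_eq_of
  simp only [diagSL, Matrix.diagonal_transpose, Matrix.diagonal_mul_diagonal]
  rw [← Matrix.diagonal_one]
  congr 1
  funext i
  rw [zpow_neg, mul_inv_cancel₀ (zpow_ne_zero _ (Xu_ne_zero F))]

/-- `a` is the list of successive minima exponents of the lattice `g F[T]^d`. -/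
def Red {d : ℕ} (g : SLK F d) (a : Fin d → ℤ) : Prop :=
  ∃ (h : ∑ j, a j = 0) (k : Matrix.SpecialLinearGroup (Fin d) (PowerSeries F))
    (γ : Matrix.SpecialLinearGroup (Fin d) (Polynomial F)),
    g * gam γ = kmap k * diagSL a h

lemma exists_Red {d : ℕ} (g : SLK F d) : ∃ a, Red g a := by
  obtain ⟨k, γ, a, ha, h⟩ := reduction g
  refine ⟨a, ha, k, γ, ?_⟩
  apply Subtype.ext
  ext1 i j
  rw [h i j, Matrix.SpecialLinearGroup.coe_mul]
  simp [diagSL]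

lemma Red.dual {d : ℕ} {g : SLK F d} {a : Fin d → ℤ} (h : Red g a) :
    Red (dual g) (fun j => - a j) := by
  obtain ⟨h, k, γ, e⟩ := h
  refine ⟨by simp [h], _root_.dual k, _root_.dual γ, ?_⟩
  have := congrArg _root_.dual e
  rw [map_mul, map_mul, dual_diagSL, gam, kmap, dual_map, dual_map] at this
  exact this

/-- The lattice vector of `g F[T]^d` with coordinates `c`. -/
def lv {d : ℕ} (g : SLK F d) (c : Fin d → Polynomial F) : Fin d → LaurentSeries F :=
  g.1.mulVec fun j => polyToK F (c j)

lemma lv_mul {d : ℕ} (h g : SLK F d) (c : Fin d → Polynomial F) :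
    lv (h * g) c = h.1.mulVec (lv g c) := by
  rw [lv, lv, Matrix.SpecialLinearGroup.coe_mul, Matrix.mulVec_mulVec]

lemma gam_mulVec {d : ℕ} (γ : Matrix.SpecialLinearGroup (Fin d) (Polynomial F))
    (c : Fin d → Polynomial F) : lv (gam γ) c = fun j => polyToK F (γ.1.mulVec c j) := by
  ext1 i
  simp [lv, gam, Matrix.mulVec, dotProduct]

lemma lv_gam {d : ℕ} (g : SLK F d) (γ : Matrix.SpecialLinearGroup (Fin d) (Polynomial F))
    (c : Fin d → Polynomial F) : lv (g * gam γ) c = lv g (γ.1.mulVec c) := by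
  rw [lv_mul, gam_mulVec]; rfl

lemma SL_mulVec_ne_zero {d : ℕ} {R : Type*} [CommRing R] (g : Matrix.SpecialLinearGroup (Fin d) R)
    {c : Fin d → R} (hc : c ≠ 0) : g.1.mulVec c ≠ 0 := by
  intro h
  apply hc
  have := congrArg (g⁻¹).1.mulVec h
  rwa [Matrix.mulVec_mulVec, ← Matrix.SpecialLinearGroup.coe_mul, inv_mul_cancel,
    Matrix.SpecialLinearGroup.coe_one, Matrix.one_mulVec, Matrix.mulVec_zero] at this

lemma lv_ne_zero {d : ℕ} (g : SLK F d) {c : Fin d → Polynomial F} (hc : c ≠ 0) : lv g c ≠ 0 := by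
  apply SL_mulVec_ne_zero
  obtain ⟨j, hj⟩ := Function.ne_iff.1 hc
  refine Function.ne_iff.2 ⟨j, ?_⟩
  simpa [map_eq_zero_iff _ (polyToK_injective F)] using hj

lemma nrm_lv_diag {d : ℕ} (k : Matrix.SpecialLinearGroup (Fin d) (PowerSeries F))
    (a : Fin d → ℤ) (h : ∑ j, a j = 0) (c : Fin d → Polynomial F) :
    nrm (lv (kmap k * diagSL a h) c) = nrm fun j => Xu F ^ (a j) * polyToK F (c j) := by
  rw [lv_mul, nrm_kmap, lv]
  congr 1
  ext1 i
  simp [diagSL, Matrix.mulVec_diagonal]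

/-- `e` is the exponent for which `q^{-e}` is the length of a shortest vector of `g F[T]^d`. -/
def IsMinExp {d : ℕ} (g : SLK F d) (e : ℤ) : Prop :=
  (∃ c, c ≠ 0 ∧ nrm (lv g c) = qR F ^ (-e)) ∧ ∀ c, c ≠ 0 → qR F ^ (-e) ≤ nrm (lv g c)

lemma IsMinExp.unique {d : ℕ} {g : SLK F d} {e e' : ℤ} (h : IsMinExp g e) (h' : IsMinExp g e') :
    e = e' := by
  have key : ∀ {e e' : ℤ}, IsMinExp g e → IsMinExp g e' → e ≤ e' := by
    intro e e' h h'
    obtain ⟨c, hc, h1⟩ := h.1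
    have := h'.2 c hc
    rw [h1, zpow_le_zpow_iff_right₀ (one_lt_qR F)] at this
    omega
  exact le_antisymm (key h h') (key h' h)

lemma Red.isMinExp {d : ℕ} {g : SLK F d} {a : Fin d → ℤ} (h : Red g a) {e : ℤ}
    (he : ∀ j, a j ≤ e) (he' : ∃ j, a j = e) : IsMinExp g e := by
  obtain ⟨h0, k, γ, hk⟩ := h
  constructor
  · obtain ⟨j, hj⟩ := he'
    have hs : (Pi.single j 1 : Fin d → Polynomial F) ≠ 0 := by simp
    refine ⟨γ.1.mulVec (Pi.single j 1), SL_mulVec_ne_zero _ hs, ?_⟩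
    rw [← lv_gam, hk, nrm_lv_diag]
    refine le_antisymm ((nrm_le_iff (zpow_nonneg (qR_pos F).le _)).2 fun i => ?_) ?_
    · by_cases hi : i = j
      · subst hi
        rw [absv_mul, absv_Xu_zpow, Pi.single_eq_same, polyToK_one_absv, hj, mul_one]
      · rw [Pi.single_eq_of_ne hi, map_zero, mul_zero, absv_zero]
        exact zpow_nonneg (qR_pos F).le _
    · refine le_trans (le_of_eq ?_) (le_nrm _ j)
      rw [absv_mul, absv_Xu_zpow, Pi.single_eq_same, polyToK_one_absv, hj, mul_one]
  · intro c hc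
    have hc' : c = γ.1.mulVec ((γ⁻¹).1.mulVec c) := by
      rw [Matrix.mulVec_mulVec, ← Matrix.SpecialLinearGroup.coe_mul, mul_inv_cancel,
        Matrix.SpecialLinearGroup.coe_one, Matrix.one_mulVec]
    have hne := SL_mulVec_ne_zero γ⁻¹ hc
    rw [hc', ← lv_gam, hk, nrm_lv_diag]
    obtain ⟨j, hj⟩ := Function.ne_iff.1 hne
    refine le_trans ?_ (le_nrm _ j)
    rw [absv_mul, absv_Xu_zpow]
    have h1 := one_le_absv_poly F hj
    have h2 : qR F ^ (-e) ≤ qR F ^ (-(a j)) :=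
      zpow_le_zpow_right₀ (one_lt_qR F).le (by have := he j; omega)
    have h3 := zpow_nonneg (qR_pos F).le (-(a j))
    nlinarith

/-- The exponent of the first minimum: `q^{-ee g}` is the length of a shortest nonzero vector of
the lattice `g F[T]^d`. -/
def ee {d : ℕ} (g : SLK F d) : ℤ := if h : ∃ e, IsMinExp g e then h.choose else 0

lemma ee_eq {d : ℕ} {g : SLK F d} {e : ℤ} (h : IsMinExp g e) : ee g = e := by
  have hex : ∃ e, IsMinExp g e := ⟨e, h⟩
  rw [ee, dif_pos hex]
  exact hex.choose_spec.unique h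

lemma Red.ee {d : ℕ} (hd : 0 < d) {g : SLK F d} {a : Fin d → ℤ} (h : Red g a) :
    (∀ j, a j ≤ ee g) ∧ ∃ j, a j = ee g := by
  obtain ⟨j, -, hj⟩ := Finset.exists_max_image Finset.univ a ⟨⟨0, hd⟩, Finset.mem_univ _⟩
  have := ee_eq (h.isMinExp (e := a j) (fun i => hj i (Finset.mem_univ _)) ⟨j, rfl⟩)
  rw [this]
  exact ⟨fun i => hj i (Finset.mem_univ _), j, rfl⟩

lemma ee_spec {d : ℕ} (hd : 0 < d) (g : SLK F d) : IsMinExp g (ee g) := by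
  obtain ⟨a, ha⟩ := exists_Red g
  exact ha.isMinExp (ha.ee hd).1 (ha.ee hd).2

lemma ee_gam {d : ℕ} (hd : 0 < d) (g : SLK F d)
    (γ : Matrix.SpecialLinearGroup (Fin d) (Polynomial F)) : ee (g * gam γ) = ee g := by
  obtain ⟨a, ha⟩ := exists_Red g
  have ha' : Red (g * gam γ) a := by
    obtain ⟨h, k, γ', e⟩ := ha
    refine ⟨h, k, γ⁻¹ * γ', ?_⟩
    rw [← e, map_mul, map_inv]; group
  obtain ⟨h1, j, hj⟩ := ha.ee hd
  obtain ⟨h1', j', hj'⟩ := ha'.ee hd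
  have := h1 j'
  have := h1' j
  omega

lemma ee_kmap {d : ℕ} (hd : 0 < d) (g : SLK F d)
    (k : Matrix.SpecialLinearGroup (Fin d) (PowerSeries F)) : ee (kmap k * g) = ee g := by
  apply ee_eq
  have := ee_spec hd g
  simpa only [IsMinExp, lv_mul, nrm_kmap] using this

/-- If `h` shrinks no vector by more than `q^Q`, it raises the exponent by at most `Q`. -/
lemma ee_le_add {d : ℕ} (hd : 0 < d) (h g : SLK F d) (Q : ℤ)
    (H : ∀ v, nrm v ≤ qR F ^ Q * nrm (h.1.mulVec v)) : ee (h * g) ≤ ee g + Q := by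
  obtain ⟨c, hc, h1⟩ := (ee_spec hd (h * g)).1
  have h2 := (ee_spec hd g).2 c hc
  rw [lv_mul] at h1
  have h3 := h2.trans (H (lv g c))
  rw [h1, ← zpow_add₀ (qR_ne F), zpow_le_zpow_iff_right₀ (one_lt_qR F)] at h3
  omega

lemma ee_sub_le {d : ℕ} (hd : 0 < d) (h g : SLK F d) (P : ℤ)
    (H : ∀ v, nrm (h.1.mulVec v) ≤ qR F ^ P * nrm v) : ee g - P ≤ ee (h * g) := by
  obtain ⟨c, hc, h1⟩ := (ee_spec hd g).1
  have h2 := (ee_spec hd (h * g)).2 c hc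
  rw [lv_mul] at h2
  have h3 := h2.trans (H (lv g c))
  rw [h1, ← zpow_add₀ (qR_ne F), zpow_le_zpow_iff_right₀ (one_lt_qR F)] at h3
  omega

lemma ee_nonneg {d : ℕ} (hd : 0 < d) (g : SLK F d) : 0 ≤ ee g := by
  obtain ⟨a, ha⟩ := exists_Red g
  have h1 := (ha.ee hd).1
  obtain ⟨h, -⟩ := ha
  by_contra! hlt
  have : ∑ j, a j < ∑ j : Fin d, (0 : ℤ) :=
    Finset.sum_lt_sum_of_nonempty ⟨⟨0, hd⟩, Finset.mem_univ _⟩ fun i _ => (h1 i).trans_lt hlt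
  simp [h] at this

end minimum

/-! ### Contraction of the first minimum -/

section contraction
variable {F}

variable (F) in
/-- The polynomials of degree less than `n`. -/
def polyBox (n : ℕ) : Finset (Polynomial F) :=
  Finset.univ.image fun c : Fin n → F => ∑ i : Fin n, Polynomial.monomial (i : ℕ) (c i)

lemma card_polyBox_le (n : ℕ) : ((polyBox F n).card : ℝ) ≤ qR F ^ n := by
  have : (polyBox F n).card ≤ Fintype.card F ^ n := by
    refine Finset.card_image_le.trans ?_
    simp
  unfold qR
  exact_mod_cast this

lemma mem_polyBox {n : ℕ} {p : Polynomial F} (h : ∀ i, n ≤ i → p.coeff i = 0) :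
    p ∈ polyBox F n := by
  refine Finset.mem_image.2 ⟨fun i => p.coeff i, Finset.mem_univ _, ?_⟩
  ext j
  rw [Polynomial.finsetSum_coeff]
  simp only [Polynomial.coeff_monomial]
  by_cases hj : j < n
  · rw [Finset.sum_eq_single ⟨j, hj⟩]
    · simp
    · intro i _ hi
      rw [if_neg]
      intro h; exact hi (Fin.ext h)
    · simp
  · rw [h j (by omega)]
    refine Finset.sum_eq_zero fun i _ => ?_
    rw [if_neg]
    have := i.2
    omega

/-- If at most `p` of the successive minima of `g F[T]^d` are within a factor `q^{P+Q}` of the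
first, then the average of `q^{p ee}` contracts at the rate of the average of `‖H v‖^{-p}` for a
single vector `v`: there are only `q^{p(k+1)}` lattice vectors of length `q^k` times the minimum,
so summing over all vectors that may become shortest costs a factor `(P+Q+1) q^p`. -/
lemma contraction_few {d : ℕ} (hd : 0 < d) {S : Type*} [Fintype S] (H : S → SLK F d)
    (p P Q : ℕ) (A : ℝ) (hA : 0 ≤ A)
    (h1 : ∀ s v, nrm ((H s).1.mulVec v) ≤ qR F ^ (P : ℤ) * nrm v)
    (h2 : ∀ s v, nrm v ≤ qR F ^ (Q : ℤ) * nrm ((H s).1.mulVec v))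
    (h3 : ∀ v, v ≠ 0 → ∑ s, (nrm ((H s).1.mulVec v) ^ p)⁻¹ ≤ A * (nrm v ^ p)⁻¹)
    (g : SLK F d) {a : Fin d → ℤ} (ha : Red g a)
    (hfew : (Finset.univ.filter fun j => ee g - (P + Q) ≤ a j).card ≤ p) :
    ∑ s, qR F ^ ((p : ℤ) * ee (H s * g)) ≤
      A * (P + Q + 1) * qR F ^ p * qR F ^ ((p : ℤ) * ee g) := by
  obtain ⟨h0, k, γ, hk⟩ := id ha
  have hle := (ha.ee hd).1
  set e := ee g with he
  set g' := g * gam γ with hg'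
  have heg' : ee g' = e := ee_gam hd g γ
  have hq := qR_pos F
  have hq1 := one_lt_qR F
  set V : ℕ → Finset (Fin d → Polynomial F) := fun k =>
    (Fintype.piFinset fun j => polyBox F ((k : ℤ) - e + a j + 1).toNat).filter
      fun c => c ≠ 0 ∧ nrm (lv g' c) = qR F ^ ((k : ℤ) - e) with hV
  have hVcard : ∀ k ∈ Finset.range (P + Q + 1), ((V k).card : ℝ) ≤ qR F ^ (p * (k + 1)) := by
    intro k hk
    have hk' : k < P + Q + 1 := by simpa using hk
    have e1 : ((V k).card : ℝ) ≤ ∏ j, qR F ^ ((k : ℤ) - e + a j + 1).toNat := by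
      refine le_trans (Nat.cast_le.2 (Finset.card_filter_le _ _)) ?_
      rw [Fintype.card_piFinset, Nat.cast_prod]
      exact Finset.prod_le_prod (fun _ _ => Nat.cast_nonneg _) fun j _ => card_polyBox_le _
    refine e1.trans ?_
    rw [Finset.prod_pow_eq_pow_sum]
    refine pow_le_pow_right₀ hq1.le ?_
    calc ∑ j, ((k : ℤ) - e + a j + 1).toNat
        = ∑ j ∈ Finset.univ.filter (fun j => e - (P + Q) ≤ a j),
            ((k : ℤ) - e + a j + 1).toNat := by
          symm
          refine Finset.sum_subset (Finset.filter_subset _ _) fun j _ hj => ?_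
          simp only [Finset.mem_filter, Finset.mem_univ, true_and, not_le] at hj
          omega
      _ ≤ ∑ j ∈ Finset.univ.filter (fun j => e - (P + Q) ≤ a j), (k + 1) := by
          refine Finset.sum_le_sum fun j _ => ?_
          have := hle j
          omega
      _ ≤ p * (k + 1) := by
          rw [Finset.sum_const, smul_eq_mul]
          exact Nat.mul_le_mul_right _ hfew
  have hpt : ∀ s, qR F ^ ((p : ℤ) * ee (H s * g)) ≤
      ∑ k ∈ Finset.range (P + Q + 1), ∑ c ∈ V k, (nrm ((H s).1.mulVec (lv g' c)) ^ p)⁻¹ := by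
    intro s
    have hes : ee (H s * g') = ee (H s * g) := by rw [hg', ← mul_assoc, ee_gam hd]
    obtain ⟨c, hc, hcn⟩ := (ee_spec hd (H s * g')).1
    rw [hes, lv_mul] at hcn
    have hlv := lv_ne_zero g' hc
    obtain ⟨z, hz⟩ := exists_nrm_zpow hlv
    have hz1 : -e ≤ z := by
      have := (ee_spec hd g').2 c hc
      rwa [heg', hz, zpow_le_zpow_iff_right₀ hq1] at this
    have hz2 : z ≤ P + Q - e := by
      have hh := h2 s (lv g' c)
      have h' := ee_sub_le hd (H s) g P (h1 s)
      rw [hcn, hz, ← zpow_add₀ hq.ne', zpow_le_zpow_iff_right₀ hq1] at hh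
      omega
    have hmem : c ∈ V (z + e).toNat := by
      have hcast : (((z + e).toNat : ℕ) : ℤ) = z + e := Int.toNat_of_nonneg (by omega)
      rw [hV, Finset.mem_filter]
      refine ⟨?_, hc, by rw [hcast, hz]; congr 1; ring⟩
      rw [Fintype.mem_piFinset]
      intro j
      rw [hcast]
      refine mem_polyBox fun i hi => ?_
      refine poly_coeff_eq_zero F (k := z + a j) ?_ (by omega)
      have hj : absv F (Xu F ^ (a j) * polyToK F (c j)) ≤ qR F ^ z := by
        rw [← hz, hk, nrm_lv_diag]
        exact le_nrm (fun j => Xu F ^ (a j) * polyToK F (c j)) j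
      rw [absv_mul, absv_Xu_zpow, zpow_neg, inv_mul_le_iff₀ (zpow_pos hq _),
        ← zpow_add₀ hq.ne'] at hj
      rwa [add_comm] at hj
    have hnn : ∀ c, 0 ≤ (nrm ((H s).1.mulVec (lv g' c)) ^ p)⁻¹ := fun c =>
      inv_nonneg.2 (pow_nonneg (nrm_nonneg _) _)
    have hval : qR F ^ ((p : ℤ) * ee (H s * g)) = (nrm ((H s).1.mulVec (lv g' c)) ^ p)⁻¹ := by
      rw [hcn, ← zpow_natCast, ← zpow_mul, ← zpow_neg]
      congr 1; ring
    rw [hval]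
    refine le_trans ?_ (Finset.single_le_sum
      (f := fun k => ∑ c ∈ V k, (nrm ((H s).1.mulVec (lv g' c)) ^ p)⁻¹)
      (fun k _ => Finset.sum_nonneg fun c _ => hnn c)
      (Finset.mem_range.2 (show (z + e).toNat < P + Q + 1 by omega)))
    exact Finset.single_le_sum (f := fun c => (nrm ((H s).1.mulVec (lv g' c)) ^ p)⁻¹)
      (fun c _ => hnn c) hmem
  calc ∑ s, qR F ^ ((p : ℤ) * ee (H s * g))
      ≤ ∑ s, ∑ k ∈ Finset.range (P + Q + 1), ∑ c ∈ V k,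
          (nrm ((H s).1.mulVec (lv g' c)) ^ p)⁻¹ := Finset.sum_le_sum fun s _ => hpt s
    _ = ∑ k ∈ Finset.range (P + Q + 1), ∑ c ∈ V k, ∑ s,
          (nrm ((H s).1.mulVec (lv g' c)) ^ p)⁻¹ := by
        rw [Finset.sum_comm]
        refine Finset.sum_congr rfl fun k _ => ?_
        rw [Finset.sum_comm]
    _ ≤ ∑ k ∈ Finset.range (P + Q + 1), ∑ c ∈ V k,
          A * ((qR F ^ ((k : ℤ) - e)) ^ p)⁻¹ := by
        refine Finset.sum_le_sum fun k _ => Finset.sum_le_sum fun c hc => ?_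
        obtain ⟨-, hc0, hcn⟩ := Finset.mem_filter.1 hc
        rw [← hcn]
        exact h3 _ (lv_ne_zero g' hc0)
    _ ≤ ∑ k ∈ Finset.range (P + Q + 1), A * qR F ^ p * qR F ^ ((p : ℤ) * e) := by
        refine Finset.sum_le_sum fun k hk => ?_
        rw [Finset.sum_const, nsmul_eq_mul]
        have hnn : 0 ≤ A * ((qR F ^ ((k : ℤ) - e)) ^ p)⁻¹ := by positivity
        refine (mul_le_mul_of_nonneg_right (hVcard k hk) hnn).trans (le_of_eq ?_)
        have : qR F ^ (p * (k + 1)) * ((qR F ^ ((k : ℤ) - e)) ^ p)⁻¹ =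
            qR F ^ p * qR F ^ ((p : ℤ) * e) := by
          rw [← zpow_natCast (qR F ^ ((k : ℤ) - e)), ← zpow_mul, ← zpow_neg,
            ← zpow_natCast, ← zpow_natCast, ← zpow_add₀ hq.ne', ← zpow_add₀ hq.ne']
          congr 1; push_cast; ring
        linear_combination A * this
    _ = A * (P + Q + 1) * qR F ^ p * qR F ^ ((p : ℤ) * e) := by
        rw [Finset.sum_const, nsmul_eq_mul, Finset.card_range]; push_cast; ring

/-- If more than `p` of the successive minima are comparable with the first, then the last one is
forced to be large, since the exponents sum to zero. -/
lemma sum_exponents {d p r : ℕ} (hdpr : d = p + r) (a : Fin d → ℤ)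
    (h0 : ∑ j, a j = 0) (e e' D : ℤ) (hD : 0 ≤ D) (he : 0 ≤ e) (he' : 0 ≤ e')
    (ha' : ∀ j, -e' ≤ a j)
    (hmany : p < (Finset.univ.filter fun j => e - D ≤ a j).card) :
    (p + 1) * e ≤ d * D + (r - 1) * e' := by
  set S := Finset.univ.filter fun j => e - D ≤ a j with hS
  have hsplit := Finset.sum_filter_add_sum_filter_not Finset.univ (fun j => e - D ≤ a j) a
  rw [h0, ← hS] at hsplit
  have hc := Finset.card_filter_add_card_filter_not (s := (Finset.univ : Finset (Fin d)))
    (fun j => e - D ≤ a j)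
  rw [← hS, Finset.card_univ, Fintype.card_fin] at hc
  have e1 : (S.card : ℤ) * (e - D) ≤ ∑ j ∈ S, a j := by
    have := Finset.card_nsmul_le_sum S a (e - D) fun j hj => (Finset.mem_filter.1 hj).2
    simpa using this
  set S' := Finset.univ.filter fun j => ¬ (e - D ≤ a j)
  have e2 : (S'.card : ℤ) * (-e') ≤ ∑ j ∈ S', a j := by
    have := Finset.card_nsmul_le_sum S' a (-e') fun j _ => ha' j
    simpa using this
  have hc' : (S.card : ℤ) + S'.card = d := by exact_mod_cast hc
  have hS1 : (p : ℤ) + 1 ≤ S.card := by exact_mod_cast hmany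
  have hd : (d : ℤ) = p + r := by exact_mod_cast hdpr
  have e3 : (S.card : ℤ) * (e - D) ≤ S'.card * e' := by linarith
  have e4 : (S'.card : ℤ) ≤ r - 1 := by linarith
  have e5 : (S'.card : ℤ) * e' ≤ (r - 1) * e' := mul_le_mul_of_nonneg_right e4 he'
  have e6 : ((p : ℤ) + 1) * e ≤ S.card * e := mul_le_mul_of_nonneg_right hS1 he
  have e7 : (S.card : ℤ) * D ≤ d * D := mul_le_mul_of_nonneg_right (by linarith) hD
  linarith

/-- One-step contraction of `q^{p ee}`, up to a small multiple of the dual quantity `q^{r ee*}` and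
a constant. -/
lemma contraction {d p r : ℕ} (hdpr : d = p + r) (hp : 1 ≤ p) (hr : 1 ≤ r)
    {S : Type*} [Fintype S] (H : S → SLK F d)
    (P Q : ℕ) (A : ℝ) (hA : 0 ≤ A)
    (h1 : ∀ s v, nrm ((H s).1.mulVec v) ≤ qR F ^ (P : ℤ) * nrm v)
    (h2 : ∀ s v, nrm v ≤ qR F ^ (Q : ℤ) * nrm ((H s).1.mulVec v))
    (h3 : ∀ v, v ≠ 0 → ∑ s, (nrm ((H s).1.mulVec v) ^ p)⁻¹ ≤ A * (nrm v ^ p)⁻¹)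
    (B : ℕ) :
    ∃ b : ℝ, 0 ≤ b ∧ ∀ g : SLK F d, ∑ s, qR F ^ ((p : ℤ) * ee (H s * g)) ≤
      A * (P + Q + 1) * qR F ^ p * qR F ^ ((p : ℤ) * ee g) +
      Fintype.card S * qR F ^ (-(B : ℤ)) * qR F ^ ((r : ℤ) * ee (dual g)) + b := by
  have hd : 0 < d := by omega
  have hq := qR_pos F
  have hq1 := one_lt_qR F
  -- in the second case either `p * ee g + B' ≤ r * ee (dual g)` or `ee g ≤ E0`
  set B' : ℤ := B + p * Q with hB'
  set E0 : ℤ := r * d * (P + Q) + r * B' with hE0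
  refine ⟨Fintype.card S * qR F ^ ((p : ℤ) * (E0 + Q)), by positivity, fun g => ?_⟩
  obtain ⟨a, ha⟩ := exists_Red g
  by_cases hfew : (Finset.univ.filter fun j => ee g - (P + Q) ≤ a j).card ≤ p
  · have := contraction_few hd H p P Q A hA h1 h2 h3 g ha hfew
    have h5 : 0 ≤ Fintype.card S * qR F ^ (-(B : ℤ)) * qR F ^ ((r : ℤ) * ee (dual g)) := by
      positivity
    have h6 : 0 ≤ Fintype.card S * qR F ^ ((p : ℤ) * (E0 + Q)) := by positivity
    linarith
  · push Not at hfew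
    have hdual := (ha.dual.ee hd).1
    have he := ee_nonneg hd g
    have he' := ee_nonneg hd (dual g)
    have hsum := sum_exponents hdpr a ha.choose (ee g) (ee (dual g)) (P + Q) (by positivity)
      he he' (fun j => by have := hdual j; omega) hfew
    have hpt : ∀ s, qR F ^ ((p : ℤ) * ee (H s * g)) ≤
        qR F ^ (-(B : ℤ)) * qR F ^ ((r : ℤ) * ee (dual g)) + qR F ^ ((p : ℤ) * (E0 + Q)) := by
      intro s
      have hs := ee_le_add hd (H s) g Q (h2 s)
      by_cases hcase : ee g ≤ E0
      · refine le_add_of_nonneg_of_le (by positivity) ?_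
        refine zpow_le_zpow_right₀ hq1.le (mul_le_mul_of_nonneg_left (by omega) (by positivity))
      · refine le_add_of_le_of_nonneg ?_ (by positivity)
        rw [← zpow_add₀ hq.ne']
        refine zpow_le_zpow_right₀ hq1.le ?_
        have h7 : (p : ℤ) * ee (H s * g) ≤ p * (ee g + Q) :=
          mul_le_mul_of_nonneg_left hs (by positivity)
        have h8 : (p : ℤ) * ee g + B' ≤ r * ee (dual g) := by
          by_contra! hlt
          apply hcase
          have hp' : (1 : ℤ) ≤ p := by exact_mod_cast hp
          have hr' : (1 : ℤ) ≤ r := by exact_mod_cast hr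
          have hB0 : 0 ≤ B' := by positivity
          have e1 := mul_le_mul_of_nonneg_left hsum (show (0 : ℤ) ≤ r by positivity)
          have e2 := mul_le_mul_of_nonneg_left hlt.le (show (0 : ℤ) ≤ r - 1 by omega)
          have e3 : ((p : ℤ) + r) * ee g ≤ r * (d * (P + Q)) + (r - 1) * B' := by nlinarith
          have e4 : ee g ≤ ((p : ℤ) + r) * ee g := by nlinarith
          rw [hE0]
          nlinarith
        rw [hB'] at h8
        linarith
    calc ∑ s, qR F ^ ((p : ℤ) * ee (H s * g))
        ≤ ∑ s : S, (qR F ^ (-(B : ℤ)) * qR F ^ ((r : ℤ) * ee (dual g)) +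
            qR F ^ ((p : ℤ) * (E0 + Q))) := Finset.sum_le_sum fun s _ => hpt s
      _ = Fintype.card S * qR F ^ (-(B : ℤ)) * qR F ^ ((r : ℤ) * ee (dual g)) +
          Fintype.card S * qR F ^ ((p : ℤ) * (E0 + Q)) := by
          rw [Finset.sum_const, nsmul_eq_mul, Finset.card_univ]; ring
      _ ≤ _ := by
          have : 0 ≤ A * (P + Q + 1) * qR F ^ p * qR F ^ ((p : ℤ) * ee g) := by positivity
          linarith

end contraction

/-! ### Averages over expanding horospherical blocks -/

section blocks
variable {F}

variable (F) in
/-- A `p × r` matrix of strings of `D` digits in `F`. -/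
abbrev Dig (p r D : ℕ) := Fin p → Fin r → Fin D → F

/-- The power series with the digits `c`, truncated after `D` terms. -/
def digPS {D : ℕ} (c : Fin D → F) : PowerSeries F :=
  PowerSeries.mk fun k => if h : k < D then c ⟨k, h⟩ else 0

lemma coeff_digPS {D : ℕ} (c : Fin D → F) (k : Fin D) : (digPS c).coeff (k : ℕ) = c k := by
  simp [digPS]

lemma digPS_neg {D : ℕ} (c : Fin D → F) : digPS (fun i => - c i) = - digPS c := by
  ext k
  simp only [digPS, PowerSeries.coeff_mk, map_neg]
  split <;> simp

lemma digPS_zero {D : ℕ} : digPS (fun _ : Fin D => (0 : F)) = 0 := by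
  ext k
  simp [digPS]

variable (F) in
/-- The embedding `𝒪_∞ = F⟦X⟧ → K_∞`. -/
abbrev oK : PowerSeries F →+* LaurentSeries F := HahnSeries.ofPowerSeries ℤ F

lemma coeff_oK (x : PowerSeries F) (k : ℕ) : (oK F x).coeff (k : ℤ) = x.coeff k := by
  simp [oK, HahnSeries.ofPowerSeries_apply_coeff]

/-- Among all digit matrices, a proportion at most `q^{-pj}` maps a given vector of norm `q^z` to
within `q^{z-j}` of a given point: the first `j` digits of one column are determined by the rest. -/
lemma card_close {p r D j : ℕ} (hj : j ≤ D) (w : Fin p → LaurentSeries F)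
    (v : Fin r → LaurentSeries F) (k0 : Fin r) (hk0 : v k0 ≠ 0) :
    (Finset.univ.filter fun s : Dig F p r D =>
        ∀ i, absv F (w i + ∑ k, oK F (digPS (s i k)) * v k) ≤
          absv F (v k0) * qR F ^ (-(j : ℤ))).card * Fintype.card F ^ (p * j) ≤
      Fintype.card (Dig F p r D) := by
  set A := Finset.univ.filter fun s : Dig F p r D =>
        ∀ i, absv F (w i + ∑ k, oK F (digPS (s i k)) * v k) ≤
          absv F (v k0) * qR F ^ (-(j : ℤ)) with hA
  have hcard : A.card * Fintype.card F ^ (p * j) =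
      (A ×ˢ (Finset.univ : Finset (Fin p → Fin j → F))).card := by
    rw [Finset.card_product, Finset.card_univ, Fintype.card_fun, Fintype.card_fun,
      Fintype.card_fin, Fintype.card_fin, ← pow_mul, mul_comm j p]
  rw [hcard, ← Finset.card_univ]
  refine Finset.card_le_card_of_injOn (fun x : Dig F p r D × (Fin p → Fin j → F) =>
    fun i k l => if h : k = k0 ∧ (l : ℕ) < j then x.2 i ⟨l, h.2⟩ else x.1 i k l)
    (fun _ _ => Finset.mem_coe.2 (Finset.mem_univ _)) ?_
  rintro ⟨c, e⟩ hc ⟨c', e'⟩ hc' heq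
  have hcA : c ∈ A := (Finset.mem_product.1 hc).1
  have hcA' : c' ∈ A := (Finset.mem_product.1 hc').1
  rw [hA, Finset.mem_filter] at hcA hcA'
  have hE : ∀ i k (l : Fin D), (if h : k = k0 ∧ (l : ℕ) < j then e i ⟨l, h.2⟩ else c i k l) =
      (if h : k = k0 ∧ (l : ℕ) < j then e' i ⟨l, h.2⟩ else c' i k l) := fun i k l =>
    congrFun (congrFun (congrFun heq i) k) l
  have hee : e = e' := by
    funext i l
    have := hE i k0 ⟨l, l.2.trans_le hj⟩
    simpa using this
  have hoff : ∀ i k, k ≠ k0 → c i k = c' i k := by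
    intro i k hk
    funext l
    have := hE i k l
    rwa [dif_neg (by tauto), dif_neg (by tauto)] at this
  have hlow : ∀ i (l : Fin D), (l : ℕ) < j → c i k0 l = c' i k0 l := by
    intro i l hl
    have hdiff : absv F ((oK F (digPS (c i k0)) - oK F (digPS (c' i k0))) * v k0) ≤
        absv F (v k0) * qR F ^ (-(j : ℤ)) := by
      have h1 := hcA.2 i
      have h2 := hcA'.2 i
      have h3 : (oK F (digPS (c i k0)) - oK F (digPS (c' i k0))) * v k0 =
          (w i + ∑ k, oK F (digPS (c i k)) * v k) +
            -(w i + ∑ k, oK F (digPS (c' i k)) * v k) := by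
        rw [neg_add, add_add_add_comm, add_neg_cancel, zero_add, ← sub_eq_add_neg,
          ← Finset.sum_sub_distrib, Finset.sum_eq_single k0]
        · ring
        · intro k _ hk
          rw [hoff i k hk, sub_self]
        · simp
      rw [h3]
      refine (absv_add_le F _ _).trans (max_le h1 ?_)
      rw [absv_neg_eq]
      exact h2
    rw [absv_mul, mul_comm, mul_le_mul_iff_right₀ (absv_pos F hk0), absv_le_iff] at hdiff
    have := hdiff l (by exact_mod_cast hl)
    rw [HahnSeries.coeff_sub, coeff_oK, coeff_oK, coeff_digPS, coeff_digPS] at this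
    exact sub_eq_zero.1 this
  have hcc : c = c' := by
    funext i k l
    by_cases hk : k = k0
    · subst hk
      by_cases hl : (l : ℕ) < j
      · exact hlow i l hl
      · have := hE i k l
        rwa [dif_neg (by tauto), dif_neg (by tauto)] at this
    · rw [hoff i k hk]
  rw [hee, hcc]

lemma absv_digsum_le {p r D : ℕ} (s : Dig F p r D) (v : Fin r → LaurentSeries F) (i : Fin p) :
    absv F (∑ k, oK F (digPS (s i k)) * v k) ≤ nrm v := by
  refine absv_sum_le _ _ (nrm_nonneg v) fun k _ => ?_
  rw [absv_mul]
  have := mul_le_mul (absv_ofPS_le_one F (digPS (s i k))) (le_nrm v k) (absv_nonneg F _) zero_le_one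
  simpa using this

/-- The average of `max(q^P |w + s v|, q^{-Q} |v|)^{-p}` over all digit matrices `s`. -/
lemma block_average {p r D P Q : ℕ} (hD : D = P + Q) (w : Fin p → LaurentSeries F)
    (v : Fin r → LaurentSeries F) (ρ : ℝ) (hρ : ρ = max (nrm w) (nrm v)) (hρ0 : 0 < ρ)
    (N : Dig F p r D → ℝ)
    (hN1 : ∀ s, qR F ^ (P : ℤ) * nrm (fun i => w i + ∑ k, oK F (digPS (s i k)) * v k) ≤ N s)
    (hN2 : ∀ s, qR F ^ (-(Q : ℤ)) * nrm v ≤ N s) :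
    ∑ s, (N s ^ p)⁻¹ ≤ Fintype.card (Dig F p r D) * (D + 1) * qR F ^ (-((p * P : ℕ) : ℤ)) *
      (ρ ^ p)⁻¹ := by
  have hq := qR_pos F
  have hq1 := one_lt_qR F
  rcases lt_or_ge (nrm v) (nrm w) with hlt | hge
  · have hρw : ρ = nrm w := by rw [hρ, max_eq_left hlt.le]
    have hw0 : w ≠ 0 := by
      rintro rfl
      have : nrm (0 : Fin p → LaurentSeries F) = 0 := dist_self _
      linarith
    obtain ⟨i, -, hi⟩ := exists_nrm_eq hw0
    have hpt : ∀ s, (N s ^ p)⁻¹ ≤ qR F ^ (-((p * P : ℕ) : ℤ)) * (ρ ^ p)⁻¹ := by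
      intro s
      have h1 : ρ ≤ nrm (fun i => w i + ∑ k, oK F (digPS (s i k)) * v k) := by
        refine le_trans ?_ (le_nrm _ i)
        have h2 := absv_add_le F (w i + ∑ k, oK F (digPS (s i k)) * v k)
          (-∑ k, oK F (digPS (s i k)) * v k)
        rw [add_neg_cancel_right, absv_neg_eq, hi, ← hρw] at h2
        rcases le_max_iff.1 h2 with h | h
        · exact h
        · have := absv_digsum_le s v i
          linarith
      have h3 : qR F ^ (P : ℤ) * ρ ≤ N s :=
        (mul_le_mul_of_nonneg_left h1 (zpow_pos hq _).le).trans (hN1 s)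
      have h4 : qR F ^ (-((p * P : ℕ) : ℤ)) * (ρ ^ p)⁻¹ = ((qR F ^ (P : ℤ) * ρ) ^ p)⁻¹ := by
        rw [mul_pow, mul_inv, zpow_neg, zpow_natCast, zpow_natCast, ← pow_mul, mul_comm p P]
      rw [h4]
      exact inv_anti₀ (by positivity) (pow_le_pow_left₀ (by positivity) h3 p)
    calc ∑ s, (N s ^ p)⁻¹ ≤ ∑ s : Dig F p r D, qR F ^ (-((p * P : ℕ) : ℤ)) * (ρ ^ p)⁻¹ :=
          Finset.sum_le_sum fun s _ => hpt s
      _ = Fintype.card (Dig F p r D) * 1 * (qR F ^ (-((p * P : ℕ) : ℤ)) * (ρ ^ p)⁻¹) := by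
          rw [Finset.sum_const, nsmul_eq_mul, Finset.card_univ, mul_one]
      _ ≤ Fintype.card (Dig F p r D) * (D + 1) * (qR F ^ (-((p * P : ℕ) : ℤ)) * (ρ ^ p)⁻¹) := by
          gcongr
          linarith [(Nat.cast_nonneg D : (0 : ℝ) ≤ D)]
      _ = _ := by ring
  · have hρv : ρ = nrm v := by rw [hρ, max_eq_right hge]
    have hv0 : v ≠ 0 := by
      rintro rfl
      have : nrm (0 : Fin r → LaurentSeries F) = 0 := dist_self _
      linarith
    obtain ⟨k0, hk0, hkv⟩ := exists_nrm_eq hv0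
    obtain ⟨z, hz⟩ := exists_nrm_zpow hv0
    set y : Dig F p r D → Fin p → LaurentSeries F :=
      fun s i => w i + ∑ k, oK F (digPS (s i k)) * v k with hy
    have hpt : ∀ s, (N s ^ p)⁻¹ ≤ ∑ j ∈ Finset.range (D + 1),
        if nrm (y s) ≤ ρ * qR F ^ (-(j : ℤ)) then
          qR F ^ (-((p * P : ℕ) : ℤ)) * (ρ ^ p)⁻¹ * qR F ^ (p * j) else 0 := by
      intro s
      have hy0 : nrm (y s) ≤ ρ * qR F ^ (-((0 : ℕ) : ℤ)) := by
        rw [Nat.cast_zero, neg_zero, zpow_zero, mul_one, nrm_le_iff hρ0.le]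
        intro i
        refine (absv_add_le F _ _).trans (max_le ?_ ?_)
        · exact (le_nrm w i).trans (hge.trans_eq hρv.symm)
        · exact (absv_digsum_le s v i).trans_eq hρv.symm
      obtain ⟨j, hj, hjmax⟩ := Finset.exists_max_image ((Finset.range (D + 1)).filter
        fun j : ℕ => nrm (y s) ≤ ρ * qR F ^ (-(j : ℤ))) id ⟨0, by simpa using hy0⟩
      rw [Finset.mem_filter, Finset.mem_range] at hj
      have hNs : qR F ^ ((P : ℤ) - j) * ρ ≤ N s := by
        rcases (Nat.lt_succ_iff.1 hj.1).eq_or_lt with h | h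
        · have := hN2 s
          rw [← hρv] at this
          convert this using 3
          omega
        · have h1 : ρ * qR F ^ (-((j + 1 : ℕ) : ℤ)) < nrm (y s) := by
            by_contra! hcon
            have := hjmax (j + 1) (Finset.mem_filter.2
              ⟨Finset.mem_range.2 (by omega), hcon⟩)
            simp at this
          have hys : y s ≠ 0 := by
            intro h0
            rw [h0] at h1
            have : nrm (0 : Fin p → LaurentSeries F) = 0 := dist_self _
            have : 0 < ρ * qR F ^ (-((j + 1 : ℕ) : ℤ)) := by positivity
            linarith
          obtain ⟨z', hz'⟩ := exists_nrm_zpow hys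
          rw [hz', hρv, hz, ← zpow_add₀ hq.ne', zpow_lt_zpow_iff_right₀ hq1] at h1
          refine le_trans ?_ (hN1 s)
          rw [hρv, hz]
          change _ ≤ _ * nrm (y s)
          rw [hz', ← zpow_add₀ hq.ne', ← zpow_add₀ hq.ne']
          refine zpow_le_zpow_right₀ hq1.le ?_
          push_cast at h1
          omega
      refine le_trans ?_ (Finset.single_le_sum (f := fun j : ℕ =>
        if nrm (y s) ≤ ρ * qR F ^ (-(j : ℤ)) then
          qR F ^ (-((p * P : ℕ) : ℤ)) * (ρ ^ p)⁻¹ * qR F ^ (p * j) else 0)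
        (fun j _ => ?_) (Finset.mem_range.2 hj.1))
      · simp only [if_pos hj.2]
        have h4 : qR F ^ (-((p * P : ℕ) : ℤ)) * (ρ ^ p)⁻¹ * qR F ^ (p * j) =
            ((qR F ^ ((P : ℤ) - j) * ρ) ^ p)⁻¹ := by
          rw [mul_pow, mul_inv, ← zpow_natCast (qR F ^ ((P : ℤ) - j)), ← zpow_mul, ← zpow_neg,
            ← zpow_natCast (qR F) (p * j), mul_right_comm, ← zpow_add₀ hq.ne']
          congr 2
          push_cast; ring
        rw [h4]
        exact inv_anti₀ (by positivity) (pow_le_pow_left₀ (by positivity) hNs p)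
      · positivity
    calc ∑ s, (N s ^ p)⁻¹
        ≤ ∑ s, ∑ j ∈ Finset.range (D + 1), (if nrm (y s) ≤ ρ * qR F ^ (-(j : ℤ)) then
          qR F ^ (-((p * P : ℕ) : ℤ)) * (ρ ^ p)⁻¹ * qR F ^ (p * j) else 0) :=
          Finset.sum_le_sum fun s _ => hpt s
      _ = ∑ j ∈ Finset.range (D + 1), ((Finset.univ.filter fun s : Dig F p r D =>
            nrm (y s) ≤ ρ * qR F ^ (-(j : ℤ))).card : ℝ) *
            (qR F ^ (-((p * P : ℕ) : ℤ)) * (ρ ^ p)⁻¹ * qR F ^ (p * j)) := by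
          rw [Finset.sum_comm]
          refine Finset.sum_congr rfl fun j _ => ?_
          rw [← Finset.sum_filter, Finset.sum_const, nsmul_eq_mul]
      _ ≤ ∑ j ∈ Finset.range (D + 1), (Fintype.card (Dig F p r D) : ℝ) *
            (qR F ^ (-((p * P : ℕ) : ℤ)) * (ρ ^ p)⁻¹) := by
          refine Finset.sum_le_sum fun j hj => ?_
          have h1 := card_close (j := j) (by simpa [Nat.lt_succ_iff] using hj) w v k0 hk0
            (p := p) (D := D)
          have h2 : (Finset.univ.filter fun s : Dig F p r D =>
              nrm (y s) ≤ ρ * qR F ^ (-(j : ℤ))) = Finset.univ.filter fun s : Dig F p r D =>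
              ∀ i, absv F (w i + ∑ k, oK F (digPS (s i k)) * v k) ≤
                absv F (v k0) * qR F ^ (-(j : ℤ)) := by
            refine Finset.filter_congr fun s _ => ?_
            rw [nrm_le_iff (by positivity), hkv, hρv]
          rw [← h2] at h1
          have h3 : ((Finset.univ.filter fun s : Dig F p r D =>
              nrm (y s) ≤ ρ * qR F ^ (-(j : ℤ))).card : ℝ) * qR F ^ (p * j) ≤
              Fintype.card (Dig F p r D) := by
            unfold qR at h1 ⊢
            exact_mod_cast h1
          calc _ = (((Finset.univ.filter fun s : Dig F p r D =>
              nrm (y s) ≤ ρ * qR F ^ (-(j : ℤ))).card : ℝ) * qR F ^ (p * j)) *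
              (qR F ^ (-((p * P : ℕ) : ℤ)) * (ρ ^ p)⁻¹) := by ring
            _ ≤ _ := mul_le_mul_of_nonneg_right h3 (by positivity)
      _ = _ := by
          rw [Finset.sum_const, nsmul_eq_mul, Finset.card_range]; push_cast; ring

/-- A family of elements of `SL_d(K_∞)` acting as `(w, v) ↦ (u^{-P} (w + s v), u^Q v)` for a splitting
of the coordinates into blocks of sizes `p` and `r`, with `s` running through the matrices of
`D = P + Q` digits. -/
structure BlockAct {d : ℕ} (p r P Q D : ℕ) {S : Type*} (H : S → SLK F d) where
  len : D = P + Q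
  /-- the coordinates of the expanded block -/
  top : Fin p → Fin d
  /-- the coordinates of the contracted block -/
  bot : Fin r → Fin d
  cover : ∀ i, (∃ j, top j = i) ∨ ∃ j, bot j = i
  /-- the digit matrix of a member of the family -/
  dig : S ≃ Dig F p r D
  act_top : ∀ s v i, (H s).1.mulVec v (top i) =
    Xu F ^ (-(P : ℤ)) * (v (top i) + ∑ k, oK F (digPS (dig s i k)) * v (bot k))
  act_bot : ∀ s v k, (H s).1.mulVec v (bot k) = Xu F ^ (Q : ℤ) * v (bot k)

namespace BlockAct
variable {d p r P Q D : ℕ} {S : Type*} {H : S → SLK F d}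

lemma nrm_eq (hH : BlockAct p r P Q D H) (v : Fin d → LaurentSeries F) :
    nrm v = max (nrm (v ∘ hH.top)) (nrm (v ∘ hH.bot)) := by
  refine le_antisymm ((nrm_le_iff (le_max_of_le_left (nrm_nonneg _))).2 fun i => ?_)
    (max_le ((nrm_le_iff (nrm_nonneg _)).2 fun i => le_nrm v _)
      ((nrm_le_iff (nrm_nonneg _)).2 fun i => le_nrm v _))
  rcases hH.cover i with ⟨j, rfl⟩ | ⟨j, rfl⟩
  · exact le_max_of_le_left (le_nrm (v ∘ hH.top) j)
  · exact le_max_of_le_right (le_nrm (v ∘ hH.bot) j)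

lemma top_le (hH : BlockAct p r P Q D H) (s : S) (v : Fin d → LaurentSeries F) :
    qR F ^ (P : ℤ) * nrm (fun i => v (hH.top i) +
      ∑ k, oK F (digPS (hH.dig s i k)) * v (hH.bot k)) ≤ nrm ((H s).1.mulVec v) := by
  have hq := qR_pos F
  rw [← le_div_iff₀' (by positivity), nrm_le_iff (div_nonneg (nrm_nonneg _) (by positivity))]
  intro i
  rw [le_div_iff₀' (by positivity)]
  have := le_nrm ((H s).1.mulVec v) (hH.top i)
  rwa [hH.act_top, absv_mul, absv_Xu_zpow, neg_neg] at this

lemma bot_le (hH : BlockAct p r P Q D H) (s : S) (v : Fin d → LaurentSeries F) :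
    qR F ^ (-(Q : ℤ)) * nrm (v ∘ hH.bot) ≤ nrm ((H s).1.mulVec v) := by
  have hq := qR_pos F
  rw [← le_div_iff₀' (by positivity), nrm_le_iff (div_nonneg (nrm_nonneg _) (by positivity))]
  intro i
  rw [le_div_iff₀' (by positivity)]
  have := le_nrm ((H s).1.mulVec v) (hH.bot i)
  rwa [hH.act_bot, absv_mul, absv_Xu_zpow] at this

lemma upper (hH : BlockAct p r P Q D H) (s : S) (v : Fin d → LaurentSeries F) :
    nrm ((H s).1.mulVec v) ≤ qR F ^ (P : ℤ) * nrm v := by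
  have hq := qR_pos F
  rw [nrm_le_iff (mul_nonneg (by positivity) (nrm_nonneg _))]
  intro i
  rcases hH.cover i with ⟨j, rfl⟩ | ⟨j, rfl⟩
  · rw [hH.act_top, absv_mul, absv_Xu_zpow, neg_neg]
    refine mul_le_mul_of_nonneg_left ?_ (by positivity)
    refine (absv_add_le F _ _).trans (max_le (le_nrm v _) ?_)
    refine (absv_digsum_le (hH.dig s) (v ∘ hH.bot) j).trans ?_
    rw [hH.nrm_eq v]
    exact le_max_right _ _
  · rw [hH.act_bot, absv_mul, absv_Xu_zpow]
    exact mul_le_mul (zpow_le_zpow_right₀ (one_lt_qR F).le (by omega)) (le_nrm v _)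
      (absv_nonneg F _) (by positivity)

lemma lower (hH : BlockAct p r P Q D H) (s : S) (v : Fin d → LaurentSeries F) :
    nrm v ≤ qR F ^ (Q : ℤ) * nrm ((H s).1.mulVec v) := by
  have hq := qR_pos F
  have hb : nrm (v ∘ hH.bot) ≤ qR F ^ (Q : ℤ) * nrm ((H s).1.mulVec v) := by
    have := hH.bot_le s v
    rwa [zpow_neg, inv_mul_le_iff₀ (by positivity)] at this
  rw [hH.nrm_eq v]
  refine max_le ?_ hb
  rw [nrm_le_iff (mul_nonneg (by positivity) (nrm_nonneg _))]
  intro i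
  have h2 := absv_add_le F (v (hH.top i) + ∑ k, oK F (digPS (hH.dig s i k)) * v (hH.bot k))
          (-∑ k, oK F (digPS (hH.dig s i k)) * v (hH.bot k))
  rw [add_neg_cancel_right, absv_neg_eq] at h2
  refine h2.trans (max_le ?_ ((absv_digsum_le (hH.dig s) (v ∘ hH.bot) i).trans hb))
  refine (le_nrm (fun i => v (hH.top i) +
      ∑ k, oK F (digPS (hH.dig s i k)) * v (hH.bot k)) i).trans ?_
  have h3 := hH.top_le s v
  have h4 : nrm (fun i => v (hH.top i) +
      ∑ k, oK F (digPS (hH.dig s i k)) * v (hH.bot k)) ≤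
      qR F ^ (-(P : ℤ)) * nrm ((H s).1.mulVec v) := by
    rwa [zpow_neg, ← div_eq_inv_mul, le_div_iff₀' (by positivity)]
  exact h4.trans (mul_le_mul_of_nonneg_right
    (zpow_le_zpow_right₀ (one_lt_qR F).le (by omega)) (nrm_nonneg _))

lemma average (hH : BlockAct p r P Q D H) [Fintype S] (v : Fin d → LaurentSeries F) (hv : v ≠ 0) :
    ∑ s, (nrm ((H s).1.mulVec v) ^ p)⁻¹ ≤
      Fintype.card S * (P + Q + 1) * qR F ^ (-((p * P : ℕ) : ℤ)) * (nrm v ^ p)⁻¹ := by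
  have := block_average hH.len (v ∘ hH.top) (v ∘ hH.bot) (nrm v) (hH.nrm_eq v)
    (nrm_pos hv) (fun c => nrm ((H (hH.dig.symm c)).1.mulVec v))
    (fun c => by simpa using hH.top_le (hH.dig.symm c) v) (fun c => hH.bot_le _ v)
  rw [Equiv.sum_comp hH.dig.symm (fun s => (nrm ((H s).1.mulVec v) ^ p)⁻¹),
    ← Fintype.card_congr hH.dig] at this
  have hD : (D : ℝ) = P + Q := by exact_mod_cast hH.len
  simpa [hD] using this

end BlockAct

end blocks

/-! ### The elements `g_t` and `u_s` and their duals -/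

section elements
variable {F}
variable {m n : ℕ}

/-- The image in `M_{m,n}(K_∞)` of a matrix over `𝒪_∞`. -/
def oMat (e : Matrix (Fin m) (Fin n) (PowerSeries F)) :
    Matrix (Fin m) (Fin n) (LaurentSeries F) := fun i k => oK F (e i k)

/-- The matrix over `𝒪_∞` with the given digits. -/
def digMat {D : ℕ} (s : Dig F m n D) : Matrix (Fin m) (Fin n) (PowerSeries F) :=
  fun i k => digPS (s i k)

lemma gMat_mulVec_top (t : ℤ) (v : Fin (m + n) → LaurentSeries F) (i : Fin m) :
    (gMat F m n t).mulVec v (Fin.castAdd n i) = Xu F ^ (-(n * t)) * v (Fin.castAdd n i) := by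
  simp [gMat, Matrix.mulVec, dotProduct, Fin.sum_univ_add, Matrix.one_apply]

lemma gMat_mulVec_bot (t : ℤ) (v : Fin (m + n) → LaurentSeries F) (k : Fin n) :
    (gMat F m n t).mulVec v (Fin.natAdd m k) = Xu F ^ (m * t) * v (Fin.natAdd m k) := by
  simp [gMat, Matrix.mulVec, dotProduct, Fin.sum_univ_add, Matrix.one_apply]

lemma gMat_transpose (t : ℤ) : (gMat F m n t).transpose = gMat F m n t := by
  simp [gMat, Matrix.fromBlocks_transpose, Matrix.transpose_reindex]

lemma uMat_mulVec_top (s : Matrix (Fin m) (Fin n) (LaurentSeries F))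
    (v : Fin (m + n) → LaurentSeries F) (i : Fin m) :
    (uMat F s).mulVec v (Fin.castAdd n i) =
      v (Fin.castAdd n i) + ∑ k, s i k * v (Fin.natAdd m k) := by
  simp [uMat, Matrix.mulVec, dotProduct, Fin.sum_univ_add, Matrix.one_apply]

lemma uMat_mulVec_bot (s : Matrix (Fin m) (Fin n) (LaurentSeries F))
    (v : Fin (m + n) → LaurentSeries F) (k : Fin n) :
    (uMat F s).mulVec v (Fin.natAdd m k) = v (Fin.natAdd m k) := by
  simp [uMat, Matrix.mulVec, dotProduct, Fin.sum_univ_add, Matrix.one_apply]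

lemma uMat_transpose_mulVec_top (s : Matrix (Fin m) (Fin n) (LaurentSeries F))
    (v : Fin (m + n) → LaurentSeries F) (i : Fin m) :
    (uMat F s).transpose.mulVec v (Fin.castAdd n i) = v (Fin.castAdd n i) := by
  simp [uMat, Matrix.mulVec, dotProduct, Fin.sum_univ_add, Matrix.one_apply]

lemma uMat_transpose_mulVec_bot (s : Matrix (Fin m) (Fin n) (LaurentSeries F))
    (v : Fin (m + n) → LaurentSeries F) (k : Fin n) :
    (uMat F s).transpose.mulVec v (Fin.natAdd m k) =
      v (Fin.natAdd m k) + ∑ i, s i k * v (Fin.castAdd n i) := by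
  simp [uMat, Matrix.mulVec, dotProduct, Fin.sum_univ_add, Matrix.one_apply, add_comm]

lemma SLK_ext {d : ℕ} {g h : SLK F d} (H : ∀ v, g.1.mulVec v = h.1.mulVec v) : g = h :=
  Subtype.ext (Matrix.ext_of_mulVec_single fun i => H _)

lemma fin_cases_add {C : Fin (m + n) → Prop} (h1 : ∀ i, C (Fin.castAdd n i))
    (h2 : ∀ k, C (Fin.natAdd m k)) (j : Fin (m + n)) : C j := Fin.addCases h1 h2 j

lemma gElem_add (a b : ℤ) : gElem F m n (a + b) = gElem F m n a * gElem F m n b := by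
  refine SLK_ext fun v => funext (fin_cases_add (fun i => ?_) fun k => ?_)
  · rw [Matrix.SpecialLinearGroup.coe_mul, ← Matrix.mulVec_mulVec]
    simp only [gElem, gMat_mulVec_top]
    rw [← mul_assoc, ← zpow_add₀ (Xu_ne_zero F)]
    congr 2; ring
  · rw [Matrix.SpecialLinearGroup.coe_mul, ← Matrix.mulVec_mulVec]
    simp only [gElem, gMat_mulVec_bot]
    rw [← mul_assoc, ← zpow_add₀ (Xu_ne_zero F)]
    congr 2; ring

lemma gElem_zero : gElem F m n 0 = 1 := by
  have := gElem_add (F := F) (m := m) (n := n) 0 0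
  simpa using this

lemma gElem_inv (a : ℤ) : (gElem F m n a)⁻¹ = gElem F m n (-a) := by
  rw [inv_eq_iff_mul_eq_one, ← gElem_add, add_neg_cancel, gElem_zero]

lemma uElem_add (s s' : Matrix (Fin m) (Fin n) (LaurentSeries F)) :
    uElem F (s + s') = uElem F s * uElem F s' := by
  refine SLK_ext fun v => funext (fin_cases_add (fun i => ?_) fun k => ?_)
  · rw [Matrix.SpecialLinearGroup.coe_mul, ← Matrix.mulVec_mulVec]
    simp only [uElem, uMat_mulVec_top, uMat_mulVec_bot, Matrix.add_apply, add_mul,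
      Finset.sum_add_distrib]
    ring
  · rw [Matrix.SpecialLinearGroup.coe_mul, ← Matrix.mulVec_mulVec]
    simp only [uElem, uMat_mulVec_bot]

lemma uElem_zero : uElem F (0 : Matrix (Fin m) (Fin n) (LaurentSeries F)) = 1 := by
  have := uElem_add (F := F) (0 : Matrix (Fin m) (Fin n) (LaurentSeries F)) 0
  simpa using this

lemma uElem_inv (s : Matrix (Fin m) (Fin n) (LaurentSeries F)) :
    (uElem F s)⁻¹ = uElem F (-s) := by
  rw [inv_eq_iff_mul_eq_one, ← uElem_add, add_neg_cancel, uElem_zero]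

/-- Conjugation by `g_t` expands the unipotent group by the factor `q^{(m+n)t}`. -/
lemma gElem_uElem (t : ℤ) (s : Matrix (Fin m) (Fin n) (LaurentSeries F)) :
    gElem F m n t * uElem F (Xu F ^ ((m + n) * t) • s) = uElem F s * gElem F m n t := by
  refine SLK_ext fun v => funext (fin_cases_add (fun i => ?_) fun k => ?_)
  · rw [Matrix.SpecialLinearGroup.coe_mul, ← Matrix.mulVec_mulVec,
      Matrix.SpecialLinearGroup.coe_mul, ← Matrix.mulVec_mulVec]
    simp only [uElem, gElem, gMat_mulVec_top, gMat_mulVec_bot, uMat_mulVec_top, Matrix.smul_apply,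
      smul_eq_mul]
    rw [mul_add, Finset.mul_sum]
    congr 1
    refine Finset.sum_congr rfl fun k _ => ?_
    have : Xu F ^ (-(n * t)) * Xu F ^ ((m + n) * t) = Xu F ^ (m * t) := by
      rw [← zpow_add₀ (Xu_ne_zero F)]
      congr 1; ring
    rw [← this]; ring
  · rw [Matrix.SpecialLinearGroup.coe_mul, ← Matrix.mulVec_mulVec,
      Matrix.SpecialLinearGroup.coe_mul, ← Matrix.mulVec_mulVec]
    simp only [uElem, gElem, gMat_mulVec_bot, uMat_mulVec_bot]

/-- `u_e` over `𝒪_∞` lies in the maximal compact subgroup. -/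
lemma uElem_oMat (e : Matrix (Fin m) (Fin n) (PowerSeries F)) :
    ∃ k, uElem F (oMat e) = kmap k := by
  refine ⟨⟨Matrix.reindex finSumFinEquiv finSumFinEquiv (Matrix.fromBlocks 1 e 0 1), ?_⟩, ?_⟩
  · rw [Matrix.det_reindex_self, Matrix.det_fromBlocks_zero₂₁, Matrix.det_one, Matrix.det_one,
      mul_one]
  · apply Subtype.ext
    ext1 i j
    change uMat F (oMat e) i j =
      oK F ((Matrix.reindex finSumFinEquiv finSumFinEquiv (Matrix.fromBlocks 1 e 0 1)) i j)
    refine Fin.addCases (fun i => ?_) (fun i => ?_) i <;>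
    refine Fin.addCases (fun j => ?_) (fun j => ?_) j <;>
      simp only [uMat, oMat, Matrix.reindex_apply, Matrix.submatrix_apply,
        finSumFinEquiv_symm_apply_castAdd, finSumFinEquiv_symm_apply_natAdd,
        Matrix.fromBlocks_apply₁₁, Matrix.fromBlocks_apply₁₂, Matrix.fromBlocks_apply₂₁,
        Matrix.fromBlocks_apply₂₂, Matrix.one_apply, Matrix.zero_apply, map_zero] <;>
      split_ifs <;> simp

variable (F m n) in
/-- The family `g_t u_s`, with `s` running through the matrices of `(m + n) t` digits. -/
def stepH (t : ℕ) (s : Dig F m n (n * t + m * t)) : SLK F (m + n) :=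
  gElem F m n t * uElem F (oMat (digMat s))

lemma stepH_zero (t : ℕ) : stepH F m n t (fun _ _ _ => 0) = gElem F m n t := by
  have : (oMat (digMat (fun _ _ _ => 0 : Dig F m n (n * t + m * t)))) = 0 := by
    ext1 i k
    simp [oMat, digMat, digPS_zero]
  rw [stepH, this, uElem_zero, mul_one]

variable (F m n) in
/-- The action of `g_t u_s` on `K_∞^{m+n}`. -/
def stepBlock (t : ℕ) : BlockAct m n (n * t) (m * t) (n * t + m * t) (stepH F m n t) where
  len := rfl
  top := Fin.castAdd n
  bot := Fin.natAdd m
  cover := fin_cases_add (fun i => Or.inl ⟨i, rfl⟩) fun k => Or.inr ⟨k, rfl⟩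
  dig := Equiv.refl _
  act_top s v i := by
    rw [stepH, Matrix.SpecialLinearGroup.coe_mul, ← Matrix.mulVec_mulVec]
    simp only [uElem, gElem, gMat_mulVec_top, uMat_mulVec_top]
    push_cast
    rfl
  act_bot s v k := by
    rw [stepH, Matrix.SpecialLinearGroup.coe_mul, ← Matrix.mulVec_mulVec]
    simp only [uElem, gElem, gMat_mulVec_bot, uMat_mulVec_bot]
    push_cast
    rfl

lemma dual_coe {d : ℕ} (g : SLK F d) : (dual g).1 = (g⁻¹).1.transpose := rfl

variable (F m n) in
/-- The dual action of `g_t u_s`: it expands the other block. -/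
def dualBlock (t : ℕ) : BlockAct n m (m * t) (n * t) (n * t + m * t)
    (fun s => dual (stepH F m n t s)) where
  len := add_comm _ _
  top := Fin.natAdd m
  bot := Fin.castAdd n
  cover := fin_cases_add (fun i => Or.inr ⟨i, rfl⟩) fun k => Or.inl ⟨k, rfl⟩
  dig :=
    { toFun := fun s k i l => - s i k l
      invFun := fun s i k l => - s k i l
      left_inv := fun s => by simp
      right_inv := fun s => by simp }
  act_top s v i := by
    rw [stepH, map_mul, Matrix.SpecialLinearGroup.coe_mul, ← Matrix.mulVec_mulVec, dual_coe,
      dual_coe, gElem_inv, uElem_inv]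
    simp only [uElem, gElem, gMat_transpose, gMat_mulVec_bot, uMat_transpose_mulVec_bot]
    simp only [Equiv.coe_fn_mk, digPS_neg, map_neg]
    push_cast
    rw [mul_neg]
    rfl
  act_bot s v k := by
    rw [stepH, map_mul, Matrix.SpecialLinearGroup.coe_mul, ← Matrix.mulVec_mulVec, dual_coe,
      dual_coe, gElem_inv, uElem_inv]
    simp only [uElem, gElem, gMat_transpose, gMat_mulVec_top, uMat_transpose_mulVec_top]
    push_cast
    rw [mul_neg, neg_neg]

end elements

/-! ### The height function, its drift, and the covering estimate -/

section height
variable {F}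
variable {m n : ℕ}

/-- The height of a point of `G/Γ`: it is large exactly when the lattice or its dual has a short
vector. -/
def ht (g : SLK F (m + n)) : ℝ := qR F ^ ((m : ℤ) * ee g) + qR F ^ ((n : ℤ) * ee (dual g))

lemma ht_pos (g : SLK F (m + n)) : 0 < ht g := by
  have := qR_pos F
  unfold ht; positivity

lemma dual_dual {d : ℕ} (g : SLK F d) : dual (dual g) = g := by
  apply dual_eq_of
  rw [← Matrix.transpose_transpose (dual g).1, ← Matrix.transpose_mul, dual_spec,
    Matrix.transpose_one]

variable (F m n) in
/-- The polynomial-in-`t` loss in one step of the drift inequality. -/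
def loss (t : ℕ) : ℝ := ((n * t + m * t : ℕ) + 1) ^ 2 * qR F ^ (m + n) + 1

lemma loss_pos (t : ℕ) : 0 < loss F m n t := by
  have := qR_pos F
  unfold loss; positivity

lemma drift_ht (hm : 1 ≤ m) (hn : 1 ≤ n) (t : ℕ) :
    ∃ b : ℝ, 0 ≤ b ∧ ∀ g : SLK F (m + n), ∑ s, ht (stepH F m n t s * g) ≤
      Fintype.card (Dig F m n (n * t + m * t)) *
        (loss F m n t * (qR F ^ (m * n * t))⁻¹ * ht g) + b := by
  have hq := qR_pos F
  have hq1 := one_lt_qR F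
  set N : ℝ := ((Fintype.card (Dig F m n (n * t + m * t)) : ℕ) : ℝ) with hN
  have hN0 : 0 ≤ N := Nat.cast_nonneg _
  obtain ⟨b₁, hb₁, h₁⟩ := contraction (F := F) (d := m + n) rfl hm hn (stepH F m n t)
    (n * t) (m * t) _ (by positivity) (stepBlock F m n t).upper (stepBlock F m n t).lower
    (stepBlock F m n t).average (m * n * t)
  obtain ⟨b₂, hb₂, h₂⟩ := contraction (F := F) (d := m + n) (add_comm m n) hn hm
    (fun s => dual (stepH F m n t s))
    (m * t) (n * t) _ (by positivity) (dualBlock F m n t).upper (dualBlock F m n t).lower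
    (dualBlock F m n t).average (m * n * t)
  refine ⟨b₁ + b₂, by positivity, fun g => ?_⟩
  have k₁ := h₁ g
  have k₂ := h₂ (dual g)
  rw [dual_dual] at k₂
  simp only [ht, map_mul, Finset.sum_add_distrib]
  rw [← hN] at k₁ k₂
  set x := qR F ^ ((m : ℤ) * ee g)
  set y := qR F ^ ((n : ℤ) * ee (dual g))
  have hx : 0 < x := by positivity
  have hy : 0 < y := by positivity
  set z := (qR F ^ (m * n * t))⁻¹ with hz
  have hz0 : 0 < z := by positivity
  have hz1 : qR F ^ (-((m * (n * t) : ℕ) : ℤ)) = z := by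
    rw [zpow_neg, zpow_natCast, hz, mul_assoc]
  have hz2 : qR F ^ (-((n * (m * t) : ℕ) : ℤ)) = z := by
    rw [zpow_neg, zpow_natCast, hz]; congr 2; ring
  have hz3 : qR F ^ (-((m * n * t : ℕ) : ℤ)) = z := by
    rw [zpow_neg, zpow_natCast, hz]
  rw [hz1, hz3] at k₁
  rw [hz2, hz3] at k₂
  set D : ℝ := ((n * t + m * t : ℕ) : ℝ) + 1 with hD
  have hD1 : ((n * t : ℕ) : ℝ) + (m * t : ℕ) + 1 = D := by rw [hD]; push_cast; ring
  have hD2 : ((m * t : ℕ) : ℝ) + (n * t : ℕ) + 1 = D := by rw [hD]; push_cast; ring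
  rw [hD1] at k₁
  rw [hD2] at k₂
  have hqm : qR F ^ m ≤ qR F ^ (m + n) := pow_le_pow_right₀ hq1.le (by omega)
  have hqn : qR F ^ n ≤ qR F ^ (m + n) := pow_le_pow_right₀ hq1.le (by omega)
  have e₁ : N * D * z * D * qR F ^ m * x ≤ N * z * D ^ 2 * qR F ^ (m + n) * x := by
    have : N * D * z * D * qR F ^ m * x = N * z * D ^ 2 * qR F ^ m * x := by ring
    rw [this]; gcongr
  have e₂ : N * D * z * D * qR F ^ n * y ≤ N * z * D ^ 2 * qR F ^ (m + n) * y := by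
    have : N * D * z * D * qR F ^ n * y = N * z * D ^ 2 * qR F ^ n * y := by ring
    rw [this]; gcongr
  have e₃ : N * (loss F m n t * z * (x + y)) = N * z * D ^ 2 * qR F ^ (m + n) * x +
      N * z * D ^ 2 * qR F ^ (m + n) * y + (N * z * y + N * z * x) := by
    rw [loss]; ring
  rw [e₃]
  linarith

/-- The drift inequality in the form used for counting: a visit to the cusp is rewarded by the
factor `q^{mnt}`. -/
lemma drift (hm : 1 ≤ m) (hn : 1 ≤ n) (t : ℕ) :
    ∃ M : ℝ, 1 ≤ M ∧ ∀ g : SLK F (m + n),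
      (if M * qR F ^ (m * n * t) < ht g then qR F ^ (m * n * t) else 1) *
        ∑ s, max (ht (stepH F m n t s * g)) M ≤
      Fintype.card (Dig F m n (n * t + m * t)) * (loss F m n t + 2) * max (ht g) M := by
  have hq := qR_pos F
  have hq1 := one_lt_qR F
  obtain ⟨b, hb, h⟩ := drift_ht (F := F) hm hn t
  set N : ℝ := ((Fintype.card (Dig F m n (n * t + m * t)) : ℕ) : ℝ) with hN
  have hN1 : 1 ≤ N := by
    rw [hN]; exact_mod_cast Fintype.card_pos
  refine ⟨max 1 b, le_max_left _ _, fun g => ?_⟩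
  set M := max 1 b
  have hM1 : 1 ≤ M := le_max_left _ _
  have hMb : b ≤ M := le_max_right _ _
  have hsum : ∑ s, max (ht (stepH F m n t s * g)) M ≤
      N * (loss F m n t * (qR F ^ (m * n * t))⁻¹ * ht g) + 2 * (N * M) := by
    have h1 : ∑ s, max (ht (stepH F m n t s * g)) M ≤
        ∑ s : Dig F m n (n * t + m * t), (ht (stepH F m n t s * g) + M) := by
      refine Finset.sum_le_sum fun s _ => max_le ?_ ?_
      · linarith
      · linarith [ht_pos (stepH F m n t s * g)]
    rw [Finset.sum_add_distrib, Finset.sum_const, nsmul_eq_mul, Finset.card_univ, ← hN] at h1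
    have := h g
    nlinarith
  have hw1 : 1 ≤ qR F ^ (m * n * t) := one_le_pow₀ hq1.le
  have hf := ht_pos g
  have hl := loss_pos (F := F) (m := m) (n := n) t
  set w := qR F ^ (m * n * t)
  have hww : w * w⁻¹ = 1 := mul_inv_cancel₀ (by positivity)
  split_ifs with hc
  · calc _ ≤ w * (N * (loss F m n t * w⁻¹ * ht g) + 2 * (N * M)) :=
          mul_le_mul_of_nonneg_left hsum (by positivity)
      _ = N * (loss F m n t * ht g + 2 * (M * w)) := by
          linear_combination (N * loss F m n t * ht g) * hww
      _ ≤ N * (loss F m n t * max (ht g) M + 2 * max (ht g) M) := by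
          gcongr
          · exact le_max_left _ _
          · exact hc.le.trans (le_max_left _ _)
      _ = _ := by ring
  · rw [one_mul]
    calc _ ≤ N * (loss F m n t * w⁻¹ * ht g) + 2 * (N * M) := hsum
      _ = N * (loss F m n t * w⁻¹ * ht g + 2 * M) := by ring
      _ ≤ N * (loss F m n t * 1 * max (ht g) M + 2 * max (ht g) M) := by
          gcongr
          · exact inv_le_one_of_one_le₀ hw1
          · exact le_max_left _ _
          · exact le_max_right _ _
      _ = _ := by ring

lemma ht_uElem (hd : 0 < m + n) (e : Matrix (Fin m) (Fin n) (PowerSeries F))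
    (g : SLK F (m + n)) : ht (uElem F (oMat e) * g) = ht g := by
  obtain ⟨k, hk⟩ := uElem_oMat e
  have hk' : dual (kmap k) = kmap (dual k) := by rw [kmap, dual_map]
  rw [ht, ht, map_mul, hk, hk', ee_kmap hd, ee_kmap hd]

/-- The number of `0 ≤ i < k` for which `g_{ti} u_e g` has height above `L`. -/
def cuspCount (t : ℕ) (L : ℝ) (k : ℕ) (g : SLK F (m + n))
    (e : Matrix (Fin m) (Fin n) (PowerSeries F)) : ℕ :=
  ((Finset.range k).filter fun i : ℕ =>
    L < ht (gElem F m n ((t * i : ℕ) : ℤ) * (uElem F (oMat e) * g))).card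

/-- The matrix over `𝒪_∞` whose leading digits are `s` and whose tail is `e`. -/
def consMat {D : ℕ} (s : Dig F m n D) (e : Matrix (Fin m) (Fin n) (PowerSeries F)) :
    Matrix (Fin m) (Fin n) (PowerSeries F) := fun i k => digPS (s i k) + PowerSeries.X ^ D * e i k

lemma exists_cons (D : ℕ) (x : PowerSeries F) :
    ∃ (c : Fin D → F) (y : PowerSeries F), x = digPS c + PowerSeries.X ^ D * y := by
  refine ⟨fun i => x.coeff i, PowerSeries.mk fun k => x.coeff (k + D), ?_⟩
  ext k
  rw [map_add, digPS, PowerSeries.coeff_mk, PowerSeries.coeff_X_pow_mul']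
  by_cases h : k < D
  · rw [dif_pos h, if_neg (by omega), add_zero]
  · rw [dif_neg h, if_pos (by omega), zero_add, PowerSeries.coeff_mk, Nat.sub_add_cancel (by omega)]

lemma exists_consMat (D : ℕ) (e : Matrix (Fin m) (Fin n) (PowerSeries F)) :
    ∃ (s : Dig F m n D) (e' : Matrix (Fin m) (Fin n) (PowerSeries F)), e = consMat s e' := by
  choose c y h using fun i k => exists_cons D (e i k)
  exact ⟨c, y, by ext1 i k; exact h i k⟩

lemma oMat_consMat {D : ℕ} (s : Dig F m n D) (e : Matrix (Fin m) (Fin n) (PowerSeries F)) :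
    oMat (consMat s e) = Xu F ^ (D : ℤ) • oMat e + oMat (digMat s) := by
  ext1 i k
  simp only [oMat, consMat, digMat, map_add, map_mul, map_pow, Matrix.add_apply,
    Matrix.smul_apply, smul_eq_mul, zpow_natCast]
  rw [HahnSeries.ofPowerSeries_X, add_comm]
  rfl

lemma gElem_uElem_consMat (t : ℕ) (s : Dig F m n (n * t + m * t))
    (e : Matrix (Fin m) (Fin n) (PowerSeries F)) (g : SLK F (m + n)) :
    gElem F m n t * (uElem F (oMat (consMat s e)) * g) =
      uElem F (oMat e) * (stepH F m n t s * g) := by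
  have h := gElem_uElem (m := m) (n := n) (t : ℤ) (oMat e)
  have hD : ((n * t + m * t : ℕ) : ℤ) = (m + n) * t := by push_cast; ring
  rw [oMat_consMat, uElem_add, hD, stepH, ← mul_assoc, ← mul_assoc, h, mul_assoc, mul_assoc,
    mul_assoc]

lemma cuspCount_succ (hd : 0 < m + n) (t : ℕ) (L : ℝ) (k : ℕ) (g : SLK F (m + n))
    (s : Dig F m n (n * t + m * t)) (e : Matrix (Fin m) (Fin n) (PowerSeries F)) :
    cuspCount t L (k + 1) g (consMat s e) =
      (if L < ht g then 1 else 0) + cuspCount t L k (stepH F m n t s * g) e := by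
  have h0 : gElem F m n ((t * 0 : ℕ) : ℤ) * (uElem F (oMat (consMat s e)) * g) =
      uElem F (oMat (consMat s e)) * g := by
    rw [mul_zero, Nat.cast_zero, gElem_zero, one_mul]
  have h1 : ∀ i : ℕ, gElem F m n ((t * (i + 1) : ℕ) : ℤ) * (uElem F (oMat (consMat s e)) * g) =
      gElem F m n ((t * i : ℕ) : ℤ) * (uElem F (oMat e) * (stepH F m n t s * g)) := by
    intro i
    have : ((t * (i + 1) : ℕ) : ℤ) = (t * i : ℕ) + (t : ℕ) := by push_cast; ring
    rw [this, gElem_add, mul_assoc, gElem_uElem_consMat]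
  unfold cuspCount
  rw [Finset.card_filter, Finset.card_filter, Finset.sum_range_succ', h0, ht_uElem hd, add_comm]
  simp only [h1]

/-- Covering the points with at least `p` visits to the cusp in `k` steps by cylinders of depth `k`:
the weighted number of cylinders grows in each step at most by the factor from the drift
inequality. -/
lemma covering (hd : 0 < m + n) (t : ℕ) {M : ℝ} (hM : 1 ≤ M)
    (hdrift : ∀ g : SLK F (m + n),
      (if M * qR F ^ (m * n * t) < ht g then qR F ^ (m * n * t) else 1) *
        ∑ s, max (ht (stepH F m n t s * g)) M ≤
      Fintype.card (Dig F m n (n * t + m * t)) * (loss F m n t + 2) * max (ht g) M)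
    (k : ℕ) (g : SLK F (m + n)) (p : ℤ) :
    ∃ T : Finset (Matrix (Fin m) (Fin n) (PowerSeries F)),
      (T.card : ℝ) ≤ (qR F ^ (m * n * t)) ^ (-p) *
        (Fintype.card (Dig F m n (n * t + m * t)) * (loss F m n t + 2)) ^ k *
          (max (ht g) M / M) ∧
      ∀ e, p ≤ cuspCount t (M * qR F ^ (m * n * t)) k g e → ∃ c ∈ T, ∀ i j,
        PowerSeries.X ^ ((n * t + m * t) * k) ∣ e i j - c i j := by
  have hq := qR_pos F
  have hq1 := one_lt_qR F
  set w := qR F ^ (m * n * t) with hw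
  have hw0 : 0 < w := by positivity
  have hw1 : 1 ≤ w := one_le_pow₀ hq1.le
  have hM0 : 0 < M := by linarith
  have hl := loss_pos (F := F) (m := m) (n := n) t
  set K : ℝ := ((Fintype.card (Dig F m n (n * t + m * t)) : ℕ) : ℝ) * (loss F m n t + 2) with hK
  have hK0 : 0 ≤ K := by positivity
  induction k generalizing g p with
  | zero =>
    by_cases hp : p ≤ 0
    · refine ⟨{0}, ?_, fun e _ => ⟨0, by simp, by simp⟩⟩
      rw [Finset.card_singleton, Nat.cast_one, pow_zero, mul_one]
      have h1 : 1 ≤ w ^ (-p) := one_le_zpow₀ hw1 (by omega)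
      have h2 : 1 ≤ max (ht g) M / M := by
        rw [le_div_iff₀ hM0, one_mul]; exact le_max_right _ _
      exact one_le_mul_of_one_le_of_one_le h1 h2
    · refine ⟨∅, ?_, fun e he => ?_⟩
      · simp only [Finset.card_empty, Nat.cast_zero]
        have := ht_pos g
        positivity
      · simp [cuspCount] at he
        omega
  | succ k ih =>
    set p' : ℤ := p - (if M * w < ht g then 1 else 0) with hp'
    choose T hT1 hT2 using fun s => ih (stepH F m n t s * g) p'
    refine ⟨Finset.univ.biUnion fun s => (T s).image (consMat s), ?_, fun e he => ?_⟩
    · have hwp : w ^ (-p') = w ^ (-p) * (if M * w < ht g then w else 1) := by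
        rw [hp']
        split_ifs
        · rw [neg_sub, sub_eq_add_neg, add_comm, zpow_add₀ hw0.ne', zpow_one]
        · rw [sub_zero, mul_one]
      calc ((Finset.univ.biUnion fun s => (T s).image (consMat s)).card : ℝ)
          ≤ ∑ s, ((T s).card : ℝ) := by
            rw [← Nat.cast_sum]
            exact Nat.cast_le.2 (Finset.card_biUnion_le.trans
              (Finset.sum_le_sum fun s _ => Finset.card_image_le))
        _ ≤ ∑ s, w ^ (-p') * K ^ k * (max (ht (stepH F m n t s * g)) M / M) :=
            Finset.sum_le_sum fun s _ => hT1 s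
        _ = w ^ (-p) * K ^ k / M * ((if M * w < ht g then w else 1) *
              ∑ s, max (ht (stepH F m n t s * g)) M) := by
            rw [hwp, Finset.mul_sum, Finset.mul_sum]
            refine Finset.sum_congr rfl fun s _ => ?_
            ring
        _ ≤ w ^ (-p) * K ^ k / M * (K * max (ht g) M) :=
            mul_le_mul_of_nonneg_left (hdrift g) (by positivity)
        _ = _ := by ring
    · obtain ⟨s, e', rfl⟩ := exists_consMat (n * t + m * t) e
      rw [cuspCount_succ hd] at he
      obtain ⟨c, hc, hdvd⟩ := hT2 s e' (by
        rw [hp']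
        push_cast at he
        linarith)
      refine ⟨consMat s c, Finset.mem_biUnion.2 ⟨s, Finset.mem_univ _,
        Finset.mem_image_of_mem _ hc⟩, fun i j => ?_⟩
      have : consMat s e' i j - consMat s c i j =
          PowerSeries.X ^ (n * t + m * t) * (e' i j - c i j) := by
        simp only [consMat]; ring
      rw [this, Nat.mul_succ, add_comm, pow_add]
      exact mul_dvd_mul_left _ (hdvd i j)

/-- The height changes by a bounded factor under `g_j` for bounded `j`. -/
lemma ht_gElem_le (hd : 0 < m + n) (j t : ℕ) (hj : j ≤ t) (g : SLK F (m + n)) :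
    ht (gElem F m n j * g) ≤ qR F ^ (m * n * t + m * n * t + m * m * t + n * n * t) * ht g := by
  have hq := qR_pos F
  have hq1 := one_lt_qR F
  have h1 := ee_le_add hd (gElem F m n j) g ((m * j : ℕ) : ℤ) (fun v => by
    rw [← stepH_zero]; exact (stepBlock F m n j).lower _ v)
  have h2 := ee_le_add hd (dual (gElem F m n j)) (dual g) ((n * j : ℕ) : ℤ) (fun v => by
    rw [← stepH_zero]; exact (dualBlock F m n j).lower _ v)
  rw [ht, ht, mul_add, map_mul, ← zpow_natCast, ← zpow_add₀ hq.ne', ← zpow_add₀ hq.ne']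
  have hmj : m * m * j ≤ m * m * t := Nat.mul_le_mul_left _ hj
  have hnj : n * n * j ≤ n * n * t := Nat.mul_le_mul_left _ hj
  zify at hmj hnj
  refine add_le_add (zpow_le_zpow_right₀ hq1.le ?_) (zpow_le_zpow_right₀ hq1.le ?_)
  · have := mul_le_mul_of_nonneg_left h1 (show (0 : ℤ) ≤ m by positivity)
    push_cast at this ⊢
    have h3 : (0 : ℤ) ≤ m * n * t := by positivity
    have h4 : (0 : ℤ) ≤ n * n * t := by positivity
    nlinarith
  · have := mul_le_mul_of_nonneg_left h2 (show (0 : ℤ) ≤ n by positivity)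
    push_cast at this ⊢
    have h3 : (0 : ℤ) ≤ m * n * t := by positivity
    have h4 : (0 : ℤ) ≤ m * m * t := by positivity
    nlinarith

end height

/-! ### Compactness of bounded parts of `G/Γ` -/

section compact

open scoped PowerSeries.WithPiTopology WithZero in
lemma continuous_oK {E : Type*} [Field E] [TopologicalSpace E] [DiscreteTopology E] :
    Continuous (HahnSeries.ofPowerSeries ℤ E : PowerSeries E → LaurentSeries E) := by
  rw [continuous_iff_continuousAt]
  intro x U hU
  obtain ⟨γ, hU₁⟩ := Valued.mem_nhds.mp hU
  obtain ⟨D, hD⟩ : ∃ D : ℕ, WithZero.exp (-(D : ℤ)) <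
      MonoidWithZeroHom.ValueGroup₀.embedding γ.1 := by
    have h0 : MonoidWithZeroHom.ValueGroup₀.embedding γ.1 ≠ (0 : ℤᵐ⁰) := by simp
    refine ⟨(-WithZero.log (MonoidWithZeroHom.ValueGroup₀.embedding γ.1 : ℤᵐ⁰) + 1).toNat, ?_⟩
    conv_rhs => rw [← WithZero.exp_log h0]
    rw [WithZero.exp_lt_exp]
    omega
  have hev : ∀ᶠ y in nhds x, ∀ i ∈ Finset.range D, y.coeff i = x.coeff i := by
    rw [Filter.eventually_all_finset]
    intro i _
    exact (PowerSeries.WithPiTopology.continuous_coeff E i).continuousAt.eventually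
      (show ∀ᶠ y in nhds (x.coeff i), y = x.coeff i by simp [nhds_discrete])
  rw [Filter.mem_map]
  filter_upwards [hev] with y hy
  rw [Set.mem_preimage]
  apply hU₁
  rw [Set.mem_setOf_eq, Valuation.restrict_lt_iff_lt_embedding]
  refine lt_of_le_of_lt ((LaurentSeries.valuation_le_iff_coeff_lt_eq_zero E).mpr fun i hi => ?_) hD
  rw [HahnSeries.coeff_sub, sub_eq_zero]
  rcases lt_or_ge i 0 with h | h
  · rw [PowerSeries.coeff_coe, PowerSeries.coeff_coe, if_pos h, if_pos h]
  · lift i to ℕ using h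
    have := hy i (Finset.mem_range.2 (by exact_mod_cast hi))
    simpa [HahnSeries.ofPowerSeries_apply_coeff] using this

open scoped PowerSeries.WithPiTopology in
/-- Matrices of determinant `1` with bounded entries form a compact set, since `E⟦X⟧` is compact. -/
lemma isCompact_boundedSL {E : Type*} [Field E] [Finite E] (d : ℕ) (u : LaurentSeries E) :
    IsCompact {h : {A : Matrix (Fin d) (Fin d) (LaurentSeries E) // A.det = 1} |
      ∀ i j, ∃ y, h.1 i j = u * HahnSeries.ofPowerSeries ℤ E y} := by
  let _ : TopologicalSpace E := ⊥
  have : DiscreteTopology E := ⟨rfl⟩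
  have : CompactSpace (PowerSeries E) := inferInstanceAs (CompactSpace ((Unit →₀ ℕ) → E))
  rw [Subtype.isCompact_iff]
  have h1 : IsCompact (Set.range fun (κ : Fin d → Fin d → PowerSeries E) =>
      (Matrix.of fun i j => u * HahnSeries.ofPowerSeries ℤ E (κ i j) :
        Matrix (Fin d) (Fin d) (LaurentSeries E))) := by
    refine isCompact_range (continuous_matrix fun i j => ?_)
    exact continuous_const.mul (continuous_oK.comp (by fun_prop))
  have h2 : IsClosed {A : Matrix (Fin d) (Fin d) (LaurentSeries E) | A.det = 1} :=
    isClosed_eq (continuous_id.matrix_det) continuous_const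
  convert h1.inter_right h2 using 1
  ext A
  constructor
  · rintro ⟨⟨A, hA⟩, h, rfl⟩
    choose κ hκ using h
    exact ⟨⟨κ, by ext1 i j; exact (hκ i j).symm⟩, hA⟩
  · rintro ⟨⟨κ, rfl⟩, hA⟩
    exact ⟨⟨_, hA⟩, fun i j => ⟨κ i j, rfl⟩, rfl⟩

variable {F} {m n : ℕ}

/-- Points of bounded height stay in a compact set (Mahler's criterion). -/
lemma exists_compact (hm : 1 ≤ m) (hn : 1 ≤ n) (L : ℝ) :
    ∃ Q : Set (XSpace F (m + n)), IsCompact Q ∧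
      ∀ g : SLK F (m + n), (g : XSpace F (m + n)) ∉ Q → L < ht g := by
  have hd : 0 < m + n := by omega
  have hq := qR_pos F
  have hq1 := one_lt_qR F
  obtain ⟨B, hB⟩ := pow_unbounded_of_one_lt L hq1
  have hcomp : IsCompact {h : SLK F (m + n) | ∀ i j, ∃ y, h.1 i j = Xu F ^ (-(B : ℤ)) * oK F y} :=
    isCompact_boundedSL (m + n) (Xu F ^ (-(B : ℤ)))
  have hcont : Continuous (QuotientGroup.mk : SLK F (m + n) → XSpace F (m + n)) :=
    continuous_quotient_mk'
  refine ⟨_, hcomp.image hcont, fun g hg => ?_⟩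
  by_contra! hle
  apply hg
  obtain ⟨a, ha⟩ := exists_Red g
  have hup := (ha.ee hd).1
  have hlow := (ha.dual.ee hd).1
  have hbd : ∀ (e : ℤ) (k : ℕ), 1 ≤ k → 0 ≤ e → qR F ^ ((k : ℤ) * e) ≤ L → e < B := by
    intro e k hk he h
    have h1 : qR F ^ e ≤ qR F ^ ((k : ℤ) * e) := by
      refine zpow_le_zpow_right₀ hq1.le ?_
      have : (1 : ℤ) ≤ k := by exact_mod_cast hk
      nlinarith
    have h2 := (h1.trans h).trans_lt hB
    rwa [← zpow_natCast, zpow_lt_zpow_iff_right₀ hq1] at h2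
  have p1 : 0 < qR F ^ ((m : ℤ) * ee g) := by positivity
  have p2 : 0 < qR F ^ ((n : ℤ) * ee (dual g)) := by positivity
  have b1 : ee g < B := hbd _ m hm (ee_nonneg hd g) (by unfold ht at hle; linarith)
  have b2 : ee (dual g) < B := hbd _ n hn (ee_nonneg hd _) (by unfold ht at hle; linarith)
  obtain ⟨h0, k, γ, hk⟩ := ha
  refine ⟨g * gam γ, fun i j => ?_, ?_⟩
  · have haj : 0 ≤ B + a j := by
      have := hlow j
      omega
    refine ⟨PowerSeries.X ^ (B + a j).toNat * k.1 i j, ?_⟩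
    rw [hk, Matrix.SpecialLinearGroup.coe_mul]
    have hX : Xu F ^ (a j) = Xu F ^ (-(B : ℤ)) * Xu F ^ (B + a j).toNat := by
      rw [← zpow_natCast, ← zpow_add₀ (Xu_ne_zero F), Int.toNat_of_nonneg haj]
      congr 1; ring
    simp only [diagSL, Matrix.mul_diagonal, hX, map_mul, map_pow, HahnSeries.ofPowerSeries_X]
    change oK F (k.1 i j) * (Xu F ^ (-(B : ℤ)) * Xu F ^ (B + a j).toNat) =
      Xu F ^ (-(B : ℤ)) * (Xu F ^ (B + a j).toNat * oK F (k.1 i j))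
    ring
  · rw [QuotientGroup.eq]
    refine ⟨γ⁻¹, ?_⟩
    rw [map_inv]
    change (gam γ)⁻¹ = _
    group

/-- `δ`-escape on average forces a large frequency of visits to the cusp along multiples of `t`. -/
lemma cuspCount_of_escape (hm : 1 ≤ m) (hn : 1 ≤ n) {δ δ' : ℝ} (hδ : δ' < δ) {t : ℕ} (ht0 : 1 ≤ t)
    (L : ℝ) (g : SLK F (m + n)) (e : Matrix (Fin m) (Fin n) (PowerSeries F))
    (h : deltaEscapes F m n δ ((uElem F (oMat e) * g : SLK F (m + n)) : XSpace F (m + n))) :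
    ∃ k₀ : ℕ, ∀ k ≥ k₀, δ' * k ≤ cuspCount t L k g e := by
  have hd : 0 < m + n := by omega
  have hq := qR_pos F
  set A := qR F ^ (m * n * t + m * n * t + m * m * t + n * n * t) with hA
  have hA0 : 0 < A := by positivity
  obtain ⟨Q, hQc, hQ⟩ := exists_compact (F := F) hm hn (A * L)
  have hlim := h Q hQc
  obtain ⟨δ₂, hδ₂, hδ₂'⟩ := exists_between hδ
  have hev := Filter.eventually_lt_of_lt_liminf (hδ₂'.trans_le hlim) (by
    refine ⟨0, ?_⟩
    simp only [Filter.eventually_map, Filter.eventually_atTop]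
    exact ⟨0, fun N _ => by positivity⟩)
  obtain ⟨N₀, hN₀⟩ := Filter.eventually_atTop.1 hev
  obtain ⟨k₁, hk₁⟩ := exists_nat_gt (1 / (t * (δ₂ - δ')))
  have ht' : (0 : ℝ) < t := by exact_mod_cast ht0
  refine ⟨max (max N₀ k₁) 1, fun k hk => ?_⟩
  have hkN : N₀ ≤ t * k := by
    have : N₀ ≤ k := (le_max_left _ _).trans ((le_max_left _ _).trans hk)
    nlinarith
  have hkk : (k₁ : ℝ) ≤ k := by
    exact_mod_cast (le_max_right _ _).trans ((le_max_left _ _).trans hk)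
  have hk1 : 1 ≤ k := (le_max_right _ _).trans hk
  have hk0 : (0 : ℝ) < k := by exact_mod_cast hk1
  have hfreq := hN₀ (t * k) hkN
  have htk : (0 : ℝ) < ((t * k : ℕ) : ℝ) := by push_cast; positivity
  rw [lt_div_iff₀ htk] at hfreq
  set Z := (Finset.Icc 1 (t * k)).filter fun ℓ : ℕ =>
    gElem F m n (ℓ : ℤ) • ((uElem F (oMat e) * g : SLK F (m + n)) : XSpace F (m + n)) ∉ Q with hZ
  set C := (Finset.range k).filter fun i : ℕ =>
    L < ht (gElem F m n ((t * i : ℕ) : ℤ) * (uElem F (oMat e) * g)) with hC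
  have hsub : Z ⊆ insert (t * k) (C.biUnion fun i => (Finset.range t).image fun j => t * i + j) := by
    intro ℓ hℓ
    rw [hZ, Finset.mem_filter, Finset.mem_Icc] at hℓ
    rw [Finset.mem_insert]
    rcases hℓ.1.2.eq_or_lt with heq | hlt
    · exact Or.inl heq
    · refine Or.inr (Finset.mem_biUnion.2 ⟨ℓ / t, ?_, Finset.mem_image.2
        ⟨ℓ % t, Finset.mem_range.2 (Nat.mod_lt _ ht0), Nat.div_add_mod _ _⟩⟩)
      rw [hC, Finset.mem_filter, Finset.mem_range]
      refine ⟨Nat.div_lt_of_lt_mul hlt, ?_⟩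
      have h1 := hQ (gElem F m n (ℓ : ℤ) * (uElem F (oMat e) * g)) hℓ.2
      have h2 : (ℓ : ℤ) = ((ℓ % t : ℕ) : ℤ) + ((t * (ℓ / t) : ℕ) : ℤ) := by
        exact_mod_cast (Nat.mod_add_div ℓ t).symm
      rw [h2, gElem_add, mul_assoc] at h1
      have h3 := ht_gElem_le hd (ℓ % t) t (Nat.mod_lt _ ht0).le
        (gElem F m n ((t * (ℓ / t) : ℕ) : ℤ) * (uElem F (oMat e) * g))
      exact lt_of_mul_lt_mul_left (h1.trans_le h3) hA0.le
  have hcard : Z.card ≤ C.card * t + 1 := by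
    refine (Finset.card_le_card hsub).trans ((Finset.card_insert_le _ _).trans ?_)
    refine Nat.add_le_add_right (Finset.card_biUnion_le.trans ?_) 1
    calc ∑ i ∈ C, ((Finset.range t).image fun j => t * i + j).card
        ≤ ∑ i ∈ C, t := Finset.sum_le_sum fun i _ => by
          simpa using Finset.card_image_le (s := Finset.range t) (f := fun j => t * i + j)
      _ = C.card * t := by simp
  have hcard' : (Z.card : ℝ) ≤ C.card * t + 1 := by exact_mod_cast hcard
  change δ' * k ≤ (C.card : ℝ)
  have h4 : 1 < t * (δ₂ - δ') * k := by
    have h5 : 0 < t * (δ₂ - δ') := mul_pos ht' (by linarith)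
    rw [div_lt_iff₀ h5] at hk₁
    nlinarith
  push_cast at hfreq
  have h6 : δ' * k * t ≤ C.card * t := by nlinarith
  exact le_of_mul_le_mul_right h6 ht'

end compact

/-! ### Hausdorff dimension from coverings -/

section hausdorff

/-- Coverings by `O(r ^ (-σ))` balls of radius `r`, along a sequence of radii tending to `0`, bound
the Hausdorff dimension by `σ`. -/
lemma dimH_le_of_cover {X : Type*} [MetricSpace X] (E : Set X) {σ C : ℝ} (hσ : 0 ≤ σ)
    (r : ℕ → ℝ) (hr0 : ∀ k, 0 ≤ r k) (hr : Filter.Tendsto r Filter.atTop (nhds 0)) (k₀ : ℕ)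
    (h : ∀ k ≥ k₀, ∃ T : Finset X, (T.card : ℝ) * r k ^ σ ≤ C ∧
      ∀ x ∈ E, ∃ c ∈ T, dist x c ≤ r k) : dimH E ≤ ENNReal.ofReal σ := by
  borelize X
  have h' : ∀ k : ℕ, ∃ T : Finset X, (T.card : ℝ) * r (k + k₀) ^ σ ≤ C ∧
      ∀ x ∈ E, ∃ c ∈ T, dist x c ≤ r (k + k₀) := fun k => h _ (Nat.le_add_left _ _)
  choose T hT hE using h'
  have hdiam : ∀ (k : ℕ) (c : X), Metric.ediam (Metric.closedBall c (r k)) ≤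
      ENNReal.ofReal (2 * r k) := fun k c =>
    Metric.ediam_le_of_forall_dist_le fun x hx y hy => by
      have := dist_triangle_right x y c
      rw [Metric.mem_closedBall] at hx hy
      linarith
  have hμ := MeasureTheory.Measure.hausdorffMeasure_le_liminf_sum σ E (l := Filter.atTop)
    (fun k : ℕ => ENNReal.ofReal (2 * r (k + k₀))) (by
      rw [← ENNReal.ofReal_zero]
      refine ENNReal.tendsto_ofReal ?_
      simpa using ((Filter.tendsto_add_atTop_iff_nat k₀).2 hr).const_mul 2)
    (fun k (c : T k) => Metric.closedBall c.1 (r (k + k₀)))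
    (Filter.Eventually.of_forall fun k c => hdiam _ _)
    (Filter.Eventually.of_forall fun k x hx => by
      obtain ⟨c, hc, hxc⟩ := hE k x hx
      exact Set.mem_iUnion.2 ⟨⟨c, hc⟩, hxc⟩)
  have hbd : ∀ k : ℕ, ∑ c : T k, Metric.ediam (Metric.closedBall c.1 (r (k + k₀))) ^ σ ≤
      ENNReal.ofReal (2 ^ σ * C) := by
    intro k
    calc ∑ c : T k, Metric.ediam (Metric.closedBall c.1 (r (k + k₀))) ^ σ
        ≤ ∑ c : T k, ENNReal.ofReal ((2 * r (k + k₀)) ^ σ) := by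
          refine Finset.sum_le_sum fun c _ => ?_
          rw [← ENNReal.ofReal_rpow_of_nonneg (by have := hr0 (k + k₀); positivity) hσ]
          exact ENNReal.rpow_le_rpow (hdiam _ _) hσ
      _ = ENNReal.ofReal ((T k).card * (2 * r (k + k₀)) ^ σ) := by
          rw [Finset.sum_const, nsmul_eq_mul, ENNReal.ofReal_mul (by positivity),
            ENNReal.ofReal_natCast, Finset.card_univ, Fintype.card_coe]
      _ ≤ _ := by
          refine ENNReal.ofReal_le_ofReal ?_
          rw [Real.mul_rpow (by norm_num) (hr0 _)]
          have := hT k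
          have h2 : (0 : ℝ) ≤ 2 ^ σ := by positivity
          nlinarith
  have hfin : MeasureTheory.Measure.hausdorffMeasure σ E ≠ ⊤ := by
    refine ne_top_of_le_ne_top (b := ENNReal.ofReal (2 ^ σ * C)) ENNReal.ofReal_ne_top (hμ.trans ?_)
    exact (Filter.liminf_le_liminf (Filter.Eventually.of_forall hbd)).trans
      (by rw [Filter.liminf_const])
  rw [← Real.coe_toNNReal σ hσ] at hfin
  exact dimH_le_of_hausdorffMeasure_ne_top hfin

variable {F} {m n : ℕ}

lemma dist_oMat_le {D : ℕ} {e c : Matrix (Fin m) (Fin n) (PowerSeries F)}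
    (h : ∀ i j, PowerSeries.X ^ D ∣ e i j - c i j) :
    dist (oMat e) (oMat c) ≤ qR F ^ (-(D : ℤ)) := by
  have hq := qR_pos F
  have h0 : 0 ≤ qR F ^ (-(D : ℤ)) := by positivity
  refine (dist_pi_le_iff h0).2 fun i => (dist_pi_le_iff h0).2 fun j => ?_
  change absv F (oK F (e i j) - oK F (c i j)) ≤ _
  rw [← map_sub, absv_le_iff]
  intro k hk
  rcases lt_or_ge k 0 with hneg | hpos
  · exact (PowerSeries.coeff_coe _ _).trans (if_pos hneg)
  · lift k to ℕ using hpos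
    rw [coeff_oK]
    exact PowerSeries.X_pow_dvd_iff.1 (h i j) k (by exact_mod_cast hk)

lemma dist_add_right_mat (P s s' : Matrix (Fin m) (Fin n) (LaurentSeries F)) :
    dist (s + P) (s' + P) = dist s s' := by
  have key : ∀ {r : ℝ}, 0 ≤ r → (dist (s + P) (s' + P) ≤ r ↔ dist s s' ≤ r) := by
    intro r hr
    refine (dist_pi_le_iff hr).trans (Iff.trans ?_ (dist_pi_le_iff hr).symm)
    refine forall_congr' fun i => (dist_pi_le_iff hr).trans (Iff.trans ?_ (dist_pi_le_iff hr).symm)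
    refine forall_congr' fun j => ?_
    change absv F ((s i j + P i j) - (s' i j + P i j)) ≤ r ↔ absv F (s i j - s' i j) ≤ r
    rw [add_sub_add_right_eq_sub]
  exact le_antisymm ((key dist_nonneg).2 le_rfl) ((key dist_nonneg).1 le_rfl)

variable (F m n) in
/-- The loss is polynomial in `t`, so it is beaten by any exponential. -/
lemma exists_time {η : ℝ} (hη : 0 < η) :
    ∃ t : ℕ, 1 ≤ t ∧ loss F m n t + 2 ≤ qR F ^ (η * t) := by
  have hq := qR_pos F
  set A : ℝ := ((m : ℝ) + n + 1) ^ 2 * qR F ^ (m + n) + 3 with hA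
  have hA0 : 0 < A := by positivity
  have hb : 1 < qR F ^ η := Real.one_lt_rpow (one_lt_qR F) hη
  have hlim := tendsto_pow_const_div_const_pow_of_one_lt 2 hb
  have hev := hlim.eventually (gt_mem_nhds (show 0 < 1 / A by positivity))
  obtain ⟨t, ht, ht1⟩ := (hev.and (Filter.eventually_ge_atTop 1)).exists
  refine ⟨t, ht1, ?_⟩
  have ht1' : (1 : ℝ) ≤ t := by exact_mod_cast ht1
  rw [div_lt_div_iff₀ (by positivity) hA0, one_mul] at ht
  rw [Real.rpow_mul hq.le, Real.rpow_natCast]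
  refine le_trans ?_ ht.le
  rw [hA, loss, mul_add]
  have h1 : (((n * t + m * t : ℕ) : ℝ) + 1) ^ 2 ≤ (((m : ℝ) + n + 1) * t) ^ 2 := by
    push_cast
    gcongr
    nlinarith
  have h2 : (((n * t + m * t : ℕ) : ℝ) + 1) ^ 2 * qR F ^ (m + n) ≤
      (((m : ℝ) + n + 1) * t) ^ 2 * qR F ^ (m + n) := by gcongr
  nlinarith

lemma card_Dig (p r D : ℕ) : (Fintype.card (Dig F p r D) : ℝ) = qR F ^ (p * r * D) := by
  simp only [Fintype.card_fun, Fintype.card_fin, qR]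
  push_cast
  rw [← pow_mul, ← pow_mul]
  congr 1
  ring

/-- The parameters over `𝒪_∞` whose trajectory visits the cusp with frequency at least `δ'` at all
times beyond `k₀`. -/
lemma dimH_cusp (hm : 1 ≤ m) (hn : 1 ≤ n) {σ δ' : ℝ} (hσ : 0 ≤ σ) {t : ℕ} (ht1 : 1 ≤ t)
    (hη : loss F m n t + 2 ≤ qR F ^ ((((m : ℝ) + n) * (σ - m * n) + m * n * δ') * t)) :
    ∃ L : ℝ, ∀ (g : SLK F (m + n)) (k₀ : ℕ),
      dimH (oMat '' {e : Matrix (Fin m) (Fin n) (PowerSeries F) |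
        ∀ k ≥ k₀, δ' * k ≤ cuspCount t L k g e}) ≤ ENNReal.ofReal σ := by
  have hd : 0 < m + n := by omega
  have hq := qR_pos F
  have hq1 := one_lt_qR F
  obtain ⟨M, hM, hdrift⟩ := drift (F := F) hm hn t
  refine ⟨M * qR F ^ (m * n * t), fun g k₀ => ?_⟩
  refine dimH_le_of_cover _ (C := max (ht g) M / M) hσ
    (fun k => qR F ^ (-(((n * t + m * t) * k : ℕ) : ℤ))) (fun k => by positivity) ?_ k₀ ?_
  · have hb : Filter.Tendsto (fun k : ℕ => ((qR F)⁻¹ ^ (n * t + m * t)) ^ k) Filter.atTop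
        (nhds 0) := by
      refine tendsto_pow_atTop_nhds_zero_of_lt_one (by positivity) ?_
      refine pow_lt_one₀ (by positivity) (inv_lt_one_of_one_lt₀ hq1) ?_
      have : 1 ≤ m * t := Nat.mul_pos hm ht1
      omega
    refine hb.congr fun k => ?_
    rw [← pow_mul, zpow_neg, zpow_natCast, inv_pow]
  · intro k hk
    obtain ⟨T, hT, hcov⟩ := covering hd t hM hdrift k g ⌈δ' * k⌉
    refine ⟨T.image oMat, ?_, ?_⟩
    · set C := max (ht g) M / M with hC
      have hC0 : 0 ≤ C := by
        have := ht_pos g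
        positivity
      have h1 : ((T.image oMat).card : ℝ) ≤ T.card := by exact_mod_cast Finset.card_image_le
      have e1 : (qR F ^ (m * n * t)) ^ (-⌈δ' * k⌉) ≤ qR F ^ (-(m * n * t * (δ' * k)) : ℝ) := by
        rw [← Real.rpow_natCast, ← Real.rpow_intCast, ← Real.rpow_mul hq.le]
        refine Real.rpow_le_rpow_of_exponent_le hq1.le ?_
        have := Int.le_ceil (δ' * k)
        push_cast
        have h0 : (0 : ℝ) ≤ m * n * t := by positivity
        nlinarith
      have hl := loss_pos (F := F) (m := m) (n := n) t
      have e2 : ((Fintype.card (Dig F m n (n * t + m * t)) : ℝ) * (loss F m n t + 2)) ^ k ≤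
          qR F ^ ((m * n * (n * t + m * t) +
            (((m : ℝ) + n) * (σ - m * n) + m * n * δ') * t) * k : ℝ) := by
        rw [card_Dig, Real.rpow_mul hq.le, Real.rpow_natCast]
        refine pow_le_pow_left₀ (by positivity) ?_ k
        rw [Real.rpow_add hq]
        refine mul_le_mul (le_of_eq ?_) hη (by positivity) (by positivity)
        rw [← Real.rpow_natCast]
        push_cast
        rfl
      have e3 : (qR F ^ (-(((n * t + m * t) * k : ℕ) : ℤ))) ^ σ =
          qR F ^ (-((n * t + m * t) * k * σ) : ℝ) := by
        rw [← Real.rpow_intCast, ← Real.rpow_mul hq.le]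
        push_cast
        congr 1
        ring
      calc ((T.image oMat).card : ℝ) * (qR F ^ (-(((n * t + m * t) * k : ℕ) : ℤ))) ^ σ
          ≤ (qR F ^ (-(m * n * t * (δ' * k)) : ℝ) * qR F ^ ((m * n * (n * t + m * t) +
            (((m : ℝ) + n) * (σ - m * n) + m * n * δ') * t) * k : ℝ) * C) *
              qR F ^ (-((n * t + m * t) * k * σ) : ℝ) := by
            rw [e3]
            refine mul_le_mul_of_nonneg_right (h1.trans (hT.trans ?_)) (by positivity)
            gcongr
        _ = C := by
            rw [mul_right_comm, ← Real.rpow_add hq, ← Real.rpow_add hq]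
            convert one_mul C using 2
            convert Real.rpow_zero _ using 2
            ring
    · rintro _ ⟨e, he, rfl⟩
      obtain ⟨c, hc, hdvd⟩ := hcov e (Int.ceil_le.2 (by exact_mod_cast he k hk))
      exact ⟨_, Finset.mem_image_of_mem _ hc, dist_oMat_le hdvd⟩

/-- Every matrix over `K_∞` is the sum of a matrix over `𝒪_∞` and a polar part with finitely many
digits. -/
lemma exists_polar (s : Matrix (Fin m) (Fin n) (LaurentSeries F)) :
    ∃ (B : ℕ) (c : Dig F m n B) (e : Matrix (Fin m) (Fin n) (PowerSeries F)),
      s = oMat e + Xu F ^ (-(B : ℤ)) • oMat (digMat c) := by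
  choose B hB using fun i j => exists_shift F (s i j)
  obtain ⟨B₀, hB₀⟩ : ∃ B₀ : ℕ, ∀ i j, B i j ≤ B₀ :=
    ⟨∑ i, ∑ j, B i j, fun i j => (Finset.single_le_sum (f := fun j => B i j)
      (fun _ _ => Nat.zero_le _) (Finset.mem_univ j)).trans
        (Finset.single_le_sum (f := fun i => ∑ j, B i j) (fun _ _ => Nat.zero_le _)
          (Finset.mem_univ i))⟩
  choose y hy using fun i j => hB i j B₀ (hB₀ i j)
  obtain ⟨c, e, he⟩ := exists_consMat B₀ (fun i j => y i j : Matrix (Fin m) (Fin n) (PowerSeries F))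
  refine ⟨B₀, c, e, ?_⟩
  have h1 : Xu F ^ (B₀ : ℤ) • s = oMat (consMat c e) := by
    rw [← he]
    ext1 i j
    exact hy i j
  rw [oMat_consMat] at h1
  have h2 : Xu F ^ (-(B₀ : ℤ)) * Xu F ^ (B₀ : ℤ) = 1 := by
    rw [← zpow_add₀ (Xu_ne_zero F), neg_add_cancel, zpow_zero]
  calc s = Xu F ^ (-(B₀ : ℤ)) • Xu F ^ (B₀ : ℤ) • s := by rw [smul_smul, h2, one_smul]
    _ = _ := by rw [h1, smul_add, smul_smul, h2, one_smul]

end hausdorff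

/-! ### The dimension bound -/

/-- **Proposition 6.5.** For every `δ ∈ [0,1]` and every `x ∈ X`, the set
`{s ∈ M_{m,n}(K_∞) : u_s x δ-escapes on average}` has Hausdorff dimension at most
`mn - δmn/(m+n)`, computed in `M_{m,n}(K_∞) ≅ K_∞^{mn}` with the sup-norm metric. -/
theorem stmt19 (F : Type*) [Field F] [Fintype F] (m n : ℕ) (hm : 1 ≤ m) (hn : 1 ≤ n)
    (δ : ℝ) (hδ0 : 0 ≤ δ) (hδ1 : δ ≤ 1) (x : XSpace F (m + n)) :
    dimH {s : Matrix (Fin m) (Fin n) (LaurentSeries F) |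
        deltaEscapes F m n δ (uElem F s • x)}
      ≤ ENNReal.ofReal ((m : ℝ) * n - δ * m * n / (m + n)) := by
  have hm' : (1 : ℝ) ≤ m := by exact_mod_cast hm
  have hn' : (1 : ℝ) ≤ n := by exact_mod_cast hn
  have hb : 0 ≤ (m : ℝ) * n - δ * m * n / (m + n) := by
    rw [sub_nonneg, div_le_iff₀ (by linarith)]
    have : 0 ≤ (m : ℝ) * n := by positivity
    nlinarith
  refine ENNReal.le_of_forall_pos_le_add fun ε hε _ => ?_
  rw [← ENNReal.ofReal_coe_nnreal, ← ENNReal.ofReal_add hb ε.coe_nonneg]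
  set σ : ℝ := (m : ℝ) * n - δ * m * n / (m + n) + ε with hσ
  have hε' : (0 : ℝ) < ε := hε
  have hmn : (0 : ℝ) < m + n := by linarith
  -- Giving up `ε` in the dimension leaves room for a frequency `δ' < δ`.
  obtain ⟨δ', hδ', hη⟩ : ∃ δ' < δ, 0 < ((m : ℝ) + n) * (σ - m * n) + m * n * δ' := by
    have h1 : ((m : ℝ) + n) * (σ - m * n) + m * n * δ = (m + n) * ε := by
      rw [hσ]
      field_simp
      ring
    refine ⟨δ - (m + n) * ε / (2 * (m * n)), sub_lt_self _ (by positivity), ?_⟩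
    have h2 : (m : ℝ) * n * ((m + n) * ε / (2 * (m * n))) = (m + n) * ε / 2 := by
      field_simp
    have h3 : 0 < ((m : ℝ) + n) * ε := by positivity
    have h4 := mul_sub ((m : ℝ) * n) δ ((m + n) * ε / (2 * (m * n)))
    rw [h2] at h4
    linarith
  obtain ⟨t, ht1, ht⟩ := exists_time F m n hη
  obtain ⟨L, hL⟩ := dimH_cusp (F := F) hm hn (σ := σ) (by positivity) ht1 ht
  obtain ⟨g, rfl⟩ := QuotientGroup.mk_surjective x
  let P : (Σ B : ℕ, Dig F m n B) → Matrix (Fin m) (Fin n) (LaurentSeries F) :=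
    fun c => Xu F ^ (-(c.1 : ℤ)) • oMat (digMat c.2)
  let E : (Σ B : ℕ, Dig F m n B) × ℕ → Set (Matrix (Fin m) (Fin n) (LaurentSeries F)) :=
    fun c => (fun s => s + P c.1) '' (oMat '' {e : Matrix (Fin m) (Fin n) (PowerSeries F) |
      ∀ k ≥ c.2, δ' * k ≤ cuspCount t L k (uElem F (P c.1) * g) e})
  have hcov : {s : Matrix (Fin m) (Fin n) (LaurentSeries F) |
      deltaEscapes F m n δ (uElem F s • (g : XSpace F (m + n)))} ⊆ ⋃ c, E c := by
    intro s hs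
    obtain ⟨B, c, e, rfl⟩ := exists_polar s
    have h1 : deltaEscapes F m n δ ((uElem F (oMat e) * (uElem F (P ⟨B, c⟩) * g) :
        SLK F (m + n)) : XSpace F (m + n)) := by
      rw [← mul_assoc, ← uElem_add]
      exact hs
    obtain ⟨k₀, hk₀⟩ := cuspCount_of_escape hm hn hδ' ht1 L _ e h1
    exact Set.mem_iUnion.2 ⟨(⟨B, c⟩, k₀), _, ⟨e, hk₀, rfl⟩, rfl⟩
  refine (dimH_mono hcov).trans ?_
  rw [dimH_iUnion]
  refine iSup_le fun c => ?_
  have hiso : Isometry fun s : Matrix (Fin m) (Fin n) (LaurentSeries F) => s + P c.1 :=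
    Isometry.of_dist_eq fun s s' => dist_add_right_mat _ s s'
  rw [hiso.dimH_image]
  exact hL _ _

end
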